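/- arXiv:1910.06388 — 2 statements merged into one kernel-verified Lean document; each statement's English description precedes it below -/
import Mathlib

section
/- There exist absolute constants c > 0 and C > 0 with the following property. For every fundamental discriminant D with |D| ≥ 16, every real Y with 3 ≤ Y ≤ |D|, and every real k ≥ 1, letting V be the set of quadratic Dirichlet characters χ modulo |D| having no real zero β of L(s,χ) with β > 1 − c/log |D|, the number of χ ∈ V satisfying L(1,χ) ≥ (log |D|)^{−kC·√((log(ω_Y(D)+2) + log log Y)/log log |D| + 2^{−ω_Y(D)})} is at least (1 − 1/k²)·#V. -/
open Filter Topology NumberField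

noncomputable section

/-- A fundamental discriminant: an integer `D ≠ 1` that is either squarefree and `≡ 1 (mod 4)`,
or `4m` with `m` squarefree and `m ≡ 2, 3 (mod 4)`. -/
def IsFundDiscr (D : ℤ) : Prop :=
  D ≠ 1 ∧ ((Squarefree D ∧ D % 4 = 1) ∨
    ∃ m : ℤ, D = 4 * m ∧ Squarefree m ∧ (m % 4 = 2 ∨ m % 4 = 3))

/-- The number of fundamental discriminants `D` with `|D| ≤ X` satisfying `P`. -/
def fdCount (P : ℤ → Prop) (X : ℝ) : ℕ :=
  Nat.card {D : ℤ // IsFundDiscr D ∧ |(D : ℝ)| ≤ X ∧ P D}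

/-- The property `P` holds for 100% of fundamental discriminants. -/
def FdDensityOne (P : ℤ → Prop) : Prop :=
  Tendsto (fun X : ℝ => (fdCount P X : ℝ) / (fdCount (fun _ => True) X : ℝ)) atTop (𝓝 1)

/-- `ω_Y(D)`: the number of primes `p ≤ Y` dividing `D`. -/
def omegaY (Y : ℝ) (D : ℤ) : ℕ :=
  Nat.card {p : ℕ // p.Prime ∧ (p : ℝ) ≤ Y ∧ (p : ℤ) ∣ D}

/-!
Fix `q = |D|` and `l = 2 log q`, and let `χ` run over the characters modulo `q` with `χ² = χ₀`.

*Near the edge.* `ζ(s) L(s, χ)` has nonnegative coefficients, so in its Taylor expansion at `2`,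
with the pole `L(1, χ) / (s - 1)` removed, truncating to `O(l)` terms and multiplying by `s - 1`
approximates `L(s, χ)` on `(1, 1 + 1 / l]`, up to bounded factors, by a linear model
`λ + (s - 1) S` with `λ = L(1, χ)` and `S > 0`; at `s = 1 - δ` the sign of `L(s, χ)` compares
`λ` with `δ S`. Hence `log L(s, χ)` increases up to `O(1)` on that interval, an absence of real
zeros within `c / l` of `1` makes `L(1, χ)` comparable to `L(1 + 1 / l, χ)`, and a zero at
`1 - δ` makes `L(s, χ)` decay proportionally to `s - 1` for `δ ≤ s - 1 ≤ 1 / l`.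

*Few exceptions.* The mean of `log L(s, χ)` over `χ` is a Dirichlet series with nonnegative
coefficients, so it does not decrease as `s` decreases to `1 + a / l`. The decay forced by zeros
near `1` is incompatible with this unless at least a fixed proportion of the characters has none.

*Second moment.* The coefficients of the mean of `log² L` over characters modulo `q` are at most
those modulo any `Q ∣ q`. For `Q` the product of the odd primes `p ≤ Y` dividing `q`, every
nontrivial `log L(s, χ)` is at most `log log Q + O(1)`, and the trivial character has
weight at most `2 ^ (1 - ω_Y(D))`. Since the mean of `log L` is nonnegative, this one-sided bound
controls the `L¹` norm, hence with the trivial bound `log log q` the second moment.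
Chebyshev's inequality at `s = 1 + 1 / l` concludes.
-/

section Development

open Complex MeasureTheory ComplexConjugate

section PartialSums

variable {N : ℕ} [NeZero N] {χ : DirichletCharacter ℂ N}

lemma sum_range_character_eq_zero (hχ : χ ≠ 1) : ∑ k ∈ Finset.range N, χ k = 0 := by
  rw [← MulChar.sum_eq_zero_of_ne_one hχ]
  exact Finset.sum_nbij' (fun k ↦ (k : ZMod N)) ZMod.val (by simp)
    (fun a _ ↦ by simpa using a.val_lt) (fun k hk ↦ ZMod.val_cast_of_lt (by simpa using hk))
    (by simp) fun _ _ ↦ rfl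

lemma sum_range_character_eq_sum_range_mod (hχ : χ ≠ 1) (n : ℕ) :
    ∑ k ∈ Finset.range n, χ k = ∑ k ∈ Finset.range (n % N), χ k := by
  have drop_periods (m r : ℕ) :
      ∑ k ∈ Finset.range (N * m + r), χ k = ∑ k ∈ Finset.range r, χ k := by
    induction m generalizing r with
    | zero => simp
    | succ m ih =>
      rw [show N * (m + 1) + r = N * m + (N + r) by ring, ih, Finset.sum_range_add,
        sum_range_character_eq_zero hχ, zero_add]
      simp
  rw [← drop_periods (n / N) (n % N), Nat.div_add_mod]

lemma norm_sum_range_character_le (hχ : χ ≠ 1) (n : ℕ) :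
    ‖∑ k ∈ Finset.range n, χ k‖ ≤ N := by
  rw [sum_range_character_eq_sum_range_mod hχ]
  calc ‖∑ k ∈ Finset.range (n % N), χ k‖ ≤ ∑ _k ∈ Finset.range (n % N), (1 : ℝ) :=
        norm_sum_le_of_le _ fun k _ ↦ χ.norm_le_one k
    _ ≤ N := by simpa using (Nat.mod_lt n (NeZero.pos N)).le

lemma norm_sum_Icc_character_le (hχ : χ ≠ 1) (n : ℕ) :
    ‖∑ k ∈ Finset.Icc 1 n, χ k‖ ≤ N := by
  have zero_eq : χ (0 : ℕ) = 0 := by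
    have hN : N ≠ 1 := by
      rintro rfl
      exact hχ χ.level_one
    simpa using χ.map_zero' hN
  have : ∑ k ∈ Finset.Icc 1 n, χ k = ∑ k ∈ Finset.range (n + 1), χ k := by
    rw [Finset.range_eq_Ico, Finset.sum_eq_sum_Ico_succ_bot n.succ_pos, zero_eq, zero_add]
    rfl
  rw [this]
  exact norm_sum_range_character_le hχ _

end PartialSums

section LFunctionBound

/-- The partial sums `∑ χ(k)` over `1 ≤ k ≤ t`, as a function of the real variable `t`. -/
def characterSum {N : ℕ} (χ : DirichletCharacter ℂ N) (t : ℝ) : ℂ :=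
  ∑ k ∈ Finset.Icc 1 ⌊t⌋₊, χ k

lemma characterSum_eq_zero {N : ℕ} (χ : DirichletCharacter ℂ N) {t : ℝ} (ht : t < 1) :
    characterSum χ t = 0 := by
  simp [characterSum, Nat.floor_eq_zero.mpr ht]

lemma mellin_characterSum_neg {N : ℕ} (χ : DirichletCharacter ℂ N) (s : ℂ) :
    mellin (characterSum χ) (-s) =
      ∫ t in Set.Ioi (1 : ℝ), characterSum χ t * (t : ℂ) ^ (-(s + 1)) := by
  have support (t : ℝ) (ht : t ∈ Set.Ioi 0 \ Set.Ici 1) :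
      (t : ℂ) ^ (-s - 1) • characterSum χ t = 0 := by
    rw [characterSum_eq_zero χ (by simpa using ht.2), smul_zero]
  rw [mellin, setIntegral_eq_of_subset_of_forall_sdiff_eq_zero measurableSet_Ioi
    (Set.Ici_subset_Ioi.mpr one_pos) support, integral_Ici_eq_integral_Ioi]
  simp only [smul_eq_mul, mul_comm, neg_add']

variable {N : ℕ} [NeZero N] {χ : DirichletCharacter ℂ N}

lemma norm_characterSum_le (hχ : χ ≠ 1) (t : ℝ) : ‖characterSum χ t‖ ≤ N :=
  norm_sum_Icc_character_le hχ _

lemma locallyIntegrable_characterSum (hχ : χ ≠ 1) : LocallyIntegrable (characterSum χ) := by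
  have meas : Measurable (characterSum χ) :=
    (measurable_from_nat (f := fun n ↦ ∑ k ∈ Finset.Icc 1 n, χ k)).comp Nat.measurable_floor
  refine (locallyIntegrable_const (N : ℝ)).mono meas.aestronglyMeasurable (.of_forall fun t ↦ ?_)
  simpa using norm_characterSum_le hχ t

lemma differentiableAt_mellin_characterSum_neg (hχ : χ ≠ 1) {s : ℂ} (hs : 0 < s.re) :
    DifferentiableAt ℂ (fun s ↦ mellin (characterSum χ) (-s)) s := by
  have top : characterSum χ =O[atTop] fun t : ℝ ↦ t ^ (-(0 : ℝ)) := by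
    refine .of_bound N (.of_forall fun t ↦ ?_)
    simpa using norm_characterSum_le hχ t
  have bot : characterSum χ =O[𝓝[>] 0] fun t : ℝ ↦ t ^ (-(-s.re - 1)) := by
    refine Asymptotics.IsBigO.of_bound 0 ?_
    filter_upwards [Ioo_mem_nhdsGT one_pos] with t ht
    simp [characterSum_eq_zero χ ht.2]
  have := mellin_differentiableAt_of_isBigO_rpow (s := -s)
    ((locallyIntegrable_characterSum hχ).locallyIntegrableOn _) top (by simpa) bot (by simp)
  exact this.comp s differentiableAt_id.neg

lemma LFunction_eq_mul_integral (hχ : χ ≠ 1) {s : ℂ} (hs : 0 < s.re) :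
    χ.LFunction s =
      s * ∫ t in Set.Ioi (1 : ℝ), characterSum χ t * (t : ℂ) ^ (-(s + 1)) := by
  have eq_of_one_lt {z : ℂ} (hz : 1 < z.re) :
      χ.LFunction z = z * mellin (characterSum χ) (-z) := by
    rw [χ.LFunction_eq_LSeries hz, mellin_characterSum_neg]
    refine LSeries_eq_mul_integral _ le_rfl (by linarith)
      (χ.LSeriesSummable_of_one_lt_re hz) (.of_bound N (.of_forall fun n ↦ ?_))
    simpa using norm_sum_Icc_character_le hχ n
  have open_halfPlane (a : ℝ) : IsOpen {z : ℂ | a < z.re} :=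
    isOpen_lt continuous_const continuous_re
  have key := AnalyticOnNhd.eqOn_of_preconnected_of_eventuallyEq (z₀ := 2)
    (U := {z : ℂ | 0 < z.re}) (f := χ.LFunction) (g := fun z ↦ z * mellin (characterSum χ) (-z))
    ((χ.differentiable_LFunction hχ).differentiableOn.analyticOnNhd (open_halfPlane 0))
    (DifferentiableOn.analyticOnNhd (fun z hz ↦ (differentiableAt_id.mul
      (differentiableAt_mellin_characterSum_neg hχ hz)).differentiableWithinAt) (open_halfPlane 0))
    (convex_halfSpace_re_gt 0).isPreconnected (by simp)
    (by filter_upwards [(open_halfPlane 1).mem_nhds (by simp)] with z hz using eq_of_one_lt hz)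
  simpa only [mellin_characterSum_neg] using key hs

theorem norm_LFunction_le (hχ : χ ≠ 1) {s : ℂ} (hs : 0 < s.re) :
    ‖χ.LFunction s‖ ≤ N * ‖s‖ / s.re := by
  have exponent : -s.re - 1 < -1 := by linarith
  have integral_le :
      ‖∫ t in Set.Ioi (1 : ℝ), characterSum χ t * (t : ℂ) ^ (-(s + 1))‖ ≤ N / s.re := calc
    _ ≤ ∫ t in Set.Ioi (1 : ℝ), N * t ^ (-s.re - 1) := by
      refine norm_integral_le_of_norm_le
        ((integrableOn_Ioi_rpow_of_lt exponent one_pos).const_mul _) ?_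
      filter_upwards [ae_restrict_mem measurableSet_Ioi] with t (ht : 1 < t)
      rw [norm_mul, norm_cpow_eq_rpow_re_of_pos (by linarith)]
      gcongr
      · exact norm_characterSum_le hχ t
      · exact ht.le
      · exact (by simp; ring : (-(s + 1)).re = -s.re - 1).le
    _ = N / s.re := by
      rw [integral_const_mul, integral_Ioi_rpow_of_lt exponent one_pos]
      simp
      ring
  rw [LFunction_eq_mul_integral hχ hs, norm_mul, mul_comm, mul_div_right_comm]
  gcongr

end LFunctionBound

section RealValues

lemma ofReal_re_character {N : ℕ} {χ : DirichletCharacter ℂ N} (hχ : χ ^ 2 = 1) (a : ZMod N) :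
    ((χ a).re : ℂ) = χ a := by
  rcases MulChar.isQuadratic_iff_sq_eq_one.mpr hχ a with h | h | h <;> simp [h]

variable {N : ℕ} [NeZero N] {χ : DirichletCharacter ℂ N}

lemma conj_LFunction_ofReal (hχ2 : χ ^ 2 = 1) (hχ : χ ≠ 1) {x : ℝ} (hx : 0 < x) :
    conj (χ.LFunction x) = χ.LFunction x := by
  rw [LFunction_eq_mul_integral hχ (by simpa using hx), map_mul, conj_ofReal, ← integral_conj]
  congr 1
  refine setIntegral_congr_fun measurableSet_Ioi fun t (ht : 1 < t) ↦ ?_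
  have power_real : (t : ℂ) ^ (-((x : ℂ) + 1)) = (t ^ (-(x + 1)) : ℝ) := by
    rw [ofReal_cpow (by linarith)]
    push_cast
    rfl
  simp only [power_real, characterSum, map_mul, map_sum, conj_ofReal,
    fun a ↦ conj_eq_iff_re.mpr (ofReal_re_character hχ2 a)]

lemma ofReal_re_LFunction (hχ2 : χ ^ 2 = 1) (hχ : χ ≠ 1) {x : ℝ} (hx : 0 < x) :
    ((χ.LFunction x).re : ℂ) = χ.LFunction x :=
  conj_eq_iff_re.mp (conj_LFunction_ofReal hχ2 hχ hx)

end RealValues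

section Logarithms

/-- The `n`-th term `Λ(n) / (log n · n ^ σ)` of the Dirichlet series of `log ζ(σ)`. -/
def logZetaTerm (σ : ℝ) (n : ℕ) : ℝ :=
  ArithmeticFunction.vonMangoldt n / Real.log n * (n : ℝ) ^ (-σ)

/-- The value `log ζ(σ)`, given by its Dirichlet series (meaningful for `σ > 1`). -/
def logZeta (σ : ℝ) : ℝ := ∑' n, logZetaTerm σ n

/-- The real part of `log L(σ, χ)`, given by its Dirichlet series (meaningful for `σ > 1`). -/
def logL {N : ℕ} (χ : DirichletCharacter ℂ N) (σ : ℝ) : ℝ :=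
  ∑' n : ℕ, logZetaTerm σ n * (χ n).re

lemma logZetaTerm_nonneg (σ : ℝ) (n : ℕ) : 0 ≤ logZetaTerm σ n :=
  mul_nonneg (div_nonneg ArithmeticFunction.vonMangoldt_nonneg (Real.log_natCast_nonneg n))
    (by positivity)

lemma logZeta_nonneg (σ : ℝ) : 0 ≤ logZeta σ :=
  tsum_nonneg (logZetaTerm_nonneg σ)

lemma summable_logZetaTerm {σ : ℝ} (hσ : 1 < σ) : Summable (logZetaTerm σ) := by
  refine .of_nonneg_of_le (logZetaTerm_nonneg σ) (fun n ↦ ?_)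
    (Real.summable_nat_rpow.mpr (neg_lt_neg hσ))
  exact mul_le_of_le_one_left (by positivity)
    (div_le_one_of_le₀ ArithmeticFunction.vonMangoldt_le_log (Real.log_natCast_nonneg n))

lemma antitone_logZetaTerm (n : ℕ) : Antitone (logZetaTerm · n) := by
  intro σ τ h
  rcases n.eq_zero_or_pos with rfl | hn
  · simp [logZetaTerm]
  · have : (1 : ℝ) ≤ n := mod_cast hn
    have := ArithmeticFunction.vonMangoldt_nonneg (n := n)
    have := Real.log_natCast_nonneg n
    simp only [logZetaTerm]
    gcongr

lemma abs_re_character_le {N : ℕ} (χ : DirichletCharacter ℂ N) (a : ZMod N) : |(χ a).re| ≤ 1 :=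
  (abs_re_le_norm _).trans (χ.norm_le_one a)

lemma abs_logL_term_le {N : ℕ} (χ : DirichletCharacter ℂ N) (σ : ℝ) (n : ℕ) :
    |logZetaTerm σ n * (χ n).re| ≤ logZetaTerm σ n := by
  rw [abs_mul, abs_of_nonneg (logZetaTerm_nonneg σ n)]
  exact mul_le_of_le_one_right (logZetaTerm_nonneg σ n) (abs_re_character_le χ _)

lemma hasSum_logL {N : ℕ} (χ : DirichletCharacter ℂ N) {σ : ℝ} (hσ : 1 < σ) :
    HasSum (fun n : ℕ ↦ logZetaTerm σ n * (χ n).re) (logL χ σ) :=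
  (Summable.of_norm_bounded (summable_logZetaTerm hσ) (abs_logL_term_le χ σ)).hasSum

lemma abs_logL_le {N : ℕ} (χ : DirichletCharacter ℂ N) {σ : ℝ} (hσ : 1 < σ) :
    |logL χ σ| ≤ logZeta σ := by
  rw [logL, logZeta, ← Real.norm_eq_abs]
  exact tsum_of_norm_bounded (summable_logZetaTerm hσ).hasSum (abs_logL_term_le χ σ)

lemma LFunction_eq_exp_logL {N : ℕ} [NeZero N] {χ : DirichletCharacter ℂ N} (hχ : χ ^ 2 = 1)
    {σ : ℝ} (hσ : 1 < σ) : χ.LFunction σ = (Real.exp (logL χ σ) : ℝ) := by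
  have hs : 1 < (σ : ℂ).re := by simpa using hσ
  rw [χ.LFunction_eq_LSeries hs, ← χ.LSeries_eq_exp_LSeries hs, ofReal_exp,
    LSeries_def₀ (by simp), logL, ofReal_tsum]
  congr 2
  funext n
  rw [logZetaTerm]
  push_cast
  rw [ofReal_re_character hχ, ofReal_cpow n.cast_nonneg, ofReal_neg, ofReal_natCast, cpow_neg]
  ring

lemma logL_one_modOne (σ : ℝ) : logL (1 : DirichletCharacter ℂ 1) σ = logZeta σ := by
  simp [logL, logZeta, MulChar.one_apply (isUnit_of_subsingleton _)]

lemma riemannZeta_eq_exp_logZeta {σ : ℝ} (hσ : 1 < σ) :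
    riemannZeta σ = (Real.exp (logZeta σ) : ℝ) := by
  rw [← logL_one_modOne, ← LFunction_eq_exp_logL (by simp) hσ,
    DirichletCharacter.LFunction_modOne_eq]

theorem exists_abs_logZeta_add_log_le :
    ∃ κ : ℝ, ∀ σ : ℝ, 1 < σ → σ ≤ 2 → |logZeta σ + Real.log (σ - 1)| ≤ κ := by
  have eq_log (σ : ℝ) (hσ : 1 < σ) :
      logZeta σ + Real.log (σ - 1) = Real.log (riemannZeta₁ σ).re := by
    have := log_riemannZeta_eq_neg_log_sub_add_ofReal hσ
    rw [riemannZeta_eq_exp_logZeta hσ, ofReal_re, Real.log_exp] at this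
    linarith
  have pos (σ : ℝ) (hσ : σ ∈ Set.Icc 1 2) : 0 < (riemannZeta₁ σ).re := by
    rcases hσ.1.eq_or_lt with rfl | h
    · simp
    · have := riemannZeta_re_pos_of_one_lt h
      rw [riemannZeta_eq_inv_sub_mul (mod_cast h.ne'), ← ofReal_one, ← ofReal_sub, ← ofReal_inv,
        re_ofReal_mul] at this
      exact pos_of_mul_pos_right this (inv_nonneg.mpr (sub_nonneg.mpr hσ.1))
  have continuous : Continuous fun σ : ℝ ↦ (riemannZeta₁ σ).re :=
    continuous_re.comp (differentiable_riemannZeta₁.continuous.comp continuous_ofReal)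
  obtain ⟨κ, hκ⟩ := isCompact_Icc.exists_bound_of_continuousOn
    (f := fun σ : ℝ ↦ Real.log (riemannZeta₁ σ).re) (s := Set.Icc 1 2)
    (continuous.continuousOn.log fun σ hσ ↦ (pos σ hσ).ne')
  exact ⟨κ, fun σ h1 h2 ↦ by simpa only [eq_log σ h1, ← Real.norm_eq_abs] using hκ σ ⟨h1.le, h2⟩⟩

theorem LFunction_re_pos_of_forall_ne_zero {N : ℕ} [NeZero N] {χ : DirichletCharacter ℂ N}
    (hχ2 : χ ^ 2 = 1) (hχ : χ ≠ 1) {x : ℝ} (hx : 0 < x)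
    (ne_zero : ∀ y : ℝ, x ≤ y → χ.LFunction y ≠ 0) : 0 < (χ.LFunction x).re := by
  by_contra! nonpos
  have continuous : Continuous fun y : ℝ ↦ (χ.LFunction y).re :=
    continuous_re.comp ((χ.differentiable_LFunction hχ).continuous.comp continuous_ofReal)
  have pos : 0 < (χ.LFunction ↑(x + 2)).re := by
    rw [LFunction_eq_exp_logL hχ2 (by linarith), ofReal_re]
    positivity
  obtain ⟨y, hy, hy0⟩ := intermediate_value_Icc (by linarith) continuous.continuousOn
    (Set.mem_Icc.mpr ⟨nonpos, pos.le⟩)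
  refine ne_zero y hy.1 ?_
  rw [← ofReal_re_LFunction hχ2 hχ (hx.trans_le hy.1)]
  exact_mod_cast hy0

theorem LFunction_one_re_pos {N : ℕ} [NeZero N] {χ : DirichletCharacter ℂ N}
    (hχ2 : χ ^ 2 = 1) (hχ : χ ≠ 1) : 0 < (χ.LFunction 1).re := by
  have := LFunction_re_pos_of_forall_ne_zero hχ2 hχ one_pos fun y hy ↦
    DirichletCharacter.LFunction_ne_zero_of_one_le_re χ (.inl hχ) (by simpa using hy)
  simpa using this

end Logarithms

section TaylorExpansion

variable {N : ℕ}

lemma abscissaOfAbsConv_zetaMul_lt (χ : DirichletCharacter ℂ N) :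
    LSeries.abscissaOfAbsConv χ.zetaMul < (2 : ℝ) :=
  (LSeries.abscissaOfAbsConv_le_of_forall_lt_LSeriesSummable (x := 1) fun y hy ↦
    χ.LSeriesSummable_zetaMul (by simpa using hy)).trans_lt (mod_cast one_lt_two)

open scoped ComplexOrder in
lemma one_le_re_LSeries_zetaMul {χ : DirichletCharacter ℂ N} (hχ : χ ^ 2 = 1) {σ : ℝ}
    (hσ : 1 < σ) : 1 ≤ (LSeries χ.zetaMul σ).re := by
  have term_one : LSeries.term χ.zetaMul σ 1 = 1 := by
    simp [LSeries.term_of_ne_zero, χ.isMultiplicative_zetaMul.1]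
  have term_nonneg (n : ℕ) : 0 ≤ (LSeries.term χ.zetaMul σ n).re :=
    (nonneg_iff.mp (LSeries.term_nonneg (χ.zetaMul_nonneg hχ n) σ)).1
  have := le_hasSum (hasSum_re (χ.LSeriesSummable_zetaMul (by simpa using hσ)).hasSum) 1
    fun n _ ↦ term_nonneg n
  rwa [term_one, one_re, ← LSeries] at this

/-- The coefficient of `(2 - s) ^ m` in the Taylor expansion of `ζ(s) L(s, χ)` at `s = 2`. The
variable `2 - s` makes these coefficients nonnegative when `χ` is quadratic. -/
def zetaLCoeff (χ : DirichletCharacter ℂ N) (m : ℕ) : ℝ :=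
  ((-1) ^ m * iteratedDeriv m (LSeries χ.zetaMul) 2).re / m.factorial

open scoped ComplexOrder in
lemma zetaLCoeff_nonneg {χ : DirichletCharacter ℂ N} (hχ : χ ^ 2 = 1) (m : ℕ) :
    0 ≤ zetaLCoeff χ m := by
  have := LSeries.iteratedDeriv_alternating (fun n ↦ χ.zetaMul_nonneg hχ n)
    (abscissaOfAbsConv_zetaMul_lt χ) m
  exact div_nonneg (nonneg_iff.mp (by simpa using this)).1 (Nat.cast_nonneg _)

lemma one_le_zetaLCoeff_zero {χ : DirichletCharacter ℂ N} (hχ : χ ^ 2 = 1) :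
    1 ≤ zetaLCoeff χ 0 := by
  simpa [zetaLCoeff] using one_le_re_LSeries_zetaMul hχ one_lt_two

variable [NeZero N] (χ : DirichletCharacter ℂ N)

/-- The product `ζ(s) L(s, χ)` with its pole removed, namely `ζ(s) L(s, χ) - L(1, χ) / (s - 1)`.
It is written with Mathlib's `riemannZeta₀` (which is `ζ(s) - 1 / (s - 1)`) so that it is
visibly entire. -/
def zetaLRegular (s : ℂ) : ℂ := riemannZeta₀ s * χ.LFunction s + dslope χ.LFunction 1 s

/-- The real part of `ζ(s) L(s, χ)` at a real point `s`. -/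
def zetaL (s : ℝ) : ℝ := (riemannZeta s * χ.LFunction s).re

open ArithmeticFunction in
lemma riemannZeta_mul_LFunction {s : ℂ} (hs : 1 < s.re) :
    riemannZeta s * χ.LFunction s = LSeries χ.zetaMul s := by
  have summable_zeta : LSeriesSummable (fun n ↦ (zeta n : ℂ)) s :=
    LSeriesSummable_zeta_iff.mpr hs
  have summable_char : LSeriesSummable (toArithmeticFunction (χ ·)) s :=
    (LSeriesSummable_congr _ fun h ↦ (χ.apply_eq_toArithmeticFunction_apply h).symm).mpr
      (χ.LSeriesSummable_of_one_lt_re hs)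
  rw [← LSeries_zeta_eq_riemannZeta hs, χ.LFunction_eq_LSeries hs,
    LSeries_congr χ.apply_eq_toArithmeticFunction_apply s,
    ← LSeries_convolution' summable_zeta summable_char, DirichletCharacter.zetaMul, ← coe_mul]
  rfl

lemma zetaLRegular_eq {s : ℂ} (hs : s ≠ 1) :
    zetaLRegular χ s = riemannZeta s * χ.LFunction s - χ.LFunction 1 * (1 * s - 1)⁻¹ := by
  rw [zetaLRegular, dslope_of_ne _ hs, slope_def_field, riemannZeta_eq_inv_sub_add hs]
  have : s - 1 ≠ 0 := sub_ne_zero.mpr hs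
  field_simp
  ring

lemma iteratedDeriv_zetaLRegular (m : ℕ) : iteratedDeriv m (zetaLRegular χ) 2 =
    iteratedDeriv m (LSeries χ.zetaMul) 2 - χ.LFunction 1 * ((-1) ^ m * m.factorial) := by
  have near_two : zetaLRegular χ =ᶠ[𝓝 2]
      LSeries χ.zetaMul - fun s : ℂ ↦ χ.LFunction 1 * (1 * s - 1)⁻¹ := by
    filter_upwards [(isOpen_lt continuous_const continuous_re).mem_nhds
      (by simp : (2 : ℂ) ∈ {s : ℂ | (1 : ℝ) < s.re})] with s (hs : 1 < s.re)
    have ne_one : s ≠ 1 := by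
      rintro rfl
      simp at hs
    rw [zetaLRegular_eq χ ne_one, riemannZeta_mul_LFunction χ hs]
    rfl
  have smooth_LSeries : ContDiffAt ℂ m (LSeries χ.zetaMul) 2 :=
    (LSeries_analyticOnNhd χ.zetaMul 2 (by simpa using abscissaOfAbsConv_zetaMul_lt χ)).contDiffAt
  have smooth_pole : ContDiffAt ℂ m (fun s : ℂ ↦ χ.LFunction 1 * (1 * s - 1)⁻¹) 2 :=
    contDiffAt_const.mul (ContDiffAt.inv (by fun_prop) (by norm_num))
  rw [near_two.iteratedDeriv_eq, iteratedDeriv_sub smooth_LSeries smooth_pole,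
    iteratedDeriv_const_mul_field, iteratedDeriv_eq_iterate (f := fun s : ℂ ↦ (1 * s - 1)⁻¹),
    iter_deriv_inv_linear_sub]
  norm_num

lemma zetaLCoeff_sub_eq (m : ℕ) : zetaLCoeff χ m - (χ.LFunction 1).re =
    ((-1) ^ m * iteratedDeriv m (zetaLRegular χ) 2).re / m.factorial := by
  have sign : ((-1 : ℂ) ^ m) * (-1) ^ m = 1 := by simp [← mul_pow]
  have : (-1) ^ m * iteratedDeriv m (zetaLRegular χ) 2 =
      (-1) ^ m * iteratedDeriv m (LSeries χ.zetaMul) 2 - (m.factorial : ℝ) * χ.LFunction 1 := by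
    rw [iteratedDeriv_zetaLRegular, ofReal_natCast]
    linear_combination (-(χ.LFunction 1) * m.factorial) * sign
  rw [this, sub_re, re_ofReal_mul, zetaLCoeff]
  field_simp

lemma one_le_zetaL {χ : DirichletCharacter ℂ N} (hχ : χ ^ 2 = 1) {s : ℝ} (hs : 1 < s) :
    1 ≤ zetaL χ s := by
  rw [zetaL, riemannZeta_mul_LFunction χ (by simpa using hs)]
  exact one_le_re_LSeries_zetaMul hχ hs

lemma differentiable_zetaLRegular {χ : DirichletCharacter ℂ N} (hχ : χ ≠ 1) :
    Differentiable ℂ (zetaLRegular χ) := by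
  have hL := χ.differentiable_LFunction hχ
  have hslope : Differentiable ℂ (dslope χ.LFunction 1) :=
    differentiableOn_univ.mp ((differentiableOn_dslope univ_mem).mpr hL.differentiableOn)
  exact (differentiable_riemannZeta₀.mul hL).add hslope

lemma hasSum_zetaLCoeff {χ : DirichletCharacter ℂ N} (hχ : χ ≠ 1) {s : ℝ} (hs : s ≠ 1) :
    HasSum (fun m ↦ (zetaLCoeff χ m - (χ.LFunction 1).re) * (2 - s) ^ m)
      (zetaL χ s - (χ.LFunction 1).re / (s - 1)) := by
  have value : zetaL χ s - (χ.LFunction 1).re / (s - 1) = (zetaLRegular χ s).re := by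
    rw [zetaLRegular_eq χ (mod_cast hs), zetaL, sub_re, one_mul, ← ofReal_one, ← ofReal_sub,
      ← ofReal_inv, re_mul_ofReal, div_eq_mul_inv]
  rw [value]
  refine (hasSum_re (hasSum_taylorSeries_of_entire (differentiable_zetaLRegular hχ) 2 s)).congr_fun
    fun m ↦ ?_
  have : (m.factorial : ℂ)⁻¹ • ((s : ℂ) - 2) ^ m • iteratedDeriv m (zetaLRegular χ) 2 =
      (((m.factorial : ℝ)⁻¹ * (2 - s) ^ m : ℝ) : ℂ) *
        ((-1) ^ m * iteratedDeriv m (zetaLRegular χ) 2) := by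
    rw [← neg_sub, neg_pow, smul_eq_mul, smul_eq_mul]
    push_cast
    ring
  rw [this, re_ofReal_mul, zetaLCoeff_sub_eq]
  ring

lemma exists_norm_zetaLRegular_le : ∃ C : ℝ, ∀ (N : ℕ) [NeZero N]
    (χ : DirichletCharacter ℂ N), χ ≠ 1 →
      ∀ s ∈ Metric.sphere (2 : ℂ) (4 / 3), ‖zetaLRegular χ s‖ ≤ C * N := by
  obtain ⟨Z, hZ⟩ := (isCompact_sphere (2 : ℂ) (4 / 3)).exists_bound_of_continuousOn
    (f := riemannZeta₀) differentiable_riemannZeta₀.continuous.continuousOn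
  refine ⟨|Z| * 5 + 18, fun N _ χ hχ s hs ↦ ?_⟩
  have norm_sub_two : ‖s - 2‖ = 4 / 3 := by simpa using hs
  have re_ge : 2 / 3 ≤ s.re := by
    have := (abs_le.mp ((abs_re_le_norm (s - 2)).trans_eq norm_sub_two)).1
    simp only [sub_re, re_ofNat] at this
    linarith
  have norm_le : ‖s‖ ≤ 10 / 3 := by
    have := norm_add_le (s - 2) 2
    simp only [sub_add_cancel, norm_sub_two, RCLike.norm_ofNat] at this
    linarith
  have norm_sub_one_ge : 1 / 3 ≤ ‖s - 1‖ := by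
    have := norm_add_le (s - 1) (-1)
    rw [show s - 1 + -1 = s - 2 by ring, norm_sub_two, norm_neg, norm_one] at this
    linarith
  have ne_one : s ≠ 1 := by
    rintro rfl
    norm_num at norm_sub_one_ge
  have L_le : ‖χ.LFunction s‖ ≤ 5 * N := calc
    _ ≤ N * ‖s‖ / s.re := norm_LFunction_le hχ (by linarith)
    _ ≤ N * (10 / 3) / (2 / 3) := by gcongr
    _ = 5 * N := by ring
  have L_one_le : ‖χ.LFunction 1‖ ≤ N := by simpa using norm_LFunction_le hχ (s := 1) (by simp)
  rw [zetaLRegular, dslope_of_ne _ ne_one, slope_def_field]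
  calc _ ≤ ‖riemannZeta₀ s‖ * ‖χ.LFunction s‖ +
        (‖χ.LFunction s‖ + ‖χ.LFunction 1‖) / ‖s - 1‖ := by
        refine (norm_add_le _ _).trans ?_
        rw [norm_mul, norm_div]
        gcongr
        exact norm_sub_le _ _
    _ ≤ |Z| * (5 * N) + (5 * N + N) / (1 / 3) := by
        gcongr
        exact (hZ s hs).trans (le_abs_self Z)
    _ = (|Z| * 5 + 18) * N := by ring

theorem exists_abs_zetaLCoeff_sub_le : ∃ C : ℝ, ∀ (N : ℕ) [NeZero N]
    (χ : DirichletCharacter ℂ N), χ ≠ 1 →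
      ∀ m, |zetaLCoeff χ m - (χ.LFunction 1).re| ≤ C * N * (3 / 4) ^ m := by
  obtain ⟨C, bound⟩ := exists_norm_zetaLRegular_le
  refine ⟨C, fun N _ χ hχ m ↦ ?_⟩
  have cauchy := norm_iteratedDeriv_le_of_forall_mem_sphere_norm_le m (by norm_num)
    (differentiable_zetaLRegular hχ).diffContOnCl (bound N χ hχ)
  rw [zetaLCoeff_sub_eq, abs_div, Nat.abs_cast, div_le_iff₀ (by positivity)]
  calc _ ≤ ‖(-1) ^ m * iteratedDeriv m (zetaLRegular χ) 2‖ := abs_re_le_norm _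
    _ = ‖iteratedDeriv m (zetaLRegular χ) 2‖ := by simp
    _ ≤ m.factorial * (C * N) / (4 / 3) ^ m := cauchy
    _ = C * N * (3 / 4) ^ m * m.factorial := by
      rw [div_eq_mul_inv, ← inv_pow]
      norm_num
      ring

end TaylorExpansion

section TruncatedExpansion

/-- The series `∑ b m * (2 - s) ^ m` cut at `M`, with the tail replaced by the value of
`∑ lam * (2 - s) ^ m` over `m ≥ M`, continued to all `s ≠ 1`. -/
def truncatedExpansion (b : ℕ → ℝ) (lam : ℝ) (M : ℕ) (s : ℝ) : ℝ :=
  ∑ m ∈ Finset.range M, b m * (2 - s) ^ m + lam * (2 - s) ^ M / (s - 1)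

variable {b : ℕ → ℝ} {lam s : ℝ} {M : ℕ}

lemma sub_truncatedExpansion_eq_tsum {g : ℝ} (hs : s ≠ 1)
    (hsum : HasSum (fun m ↦ (b m - lam) * (2 - s) ^ m) (g - lam / (s - 1))) :
    g - truncatedExpansion b lam M s = ∑' m, (b (m + M) - lam) * (2 - s) ^ (m + M) := by
  have ne_zero : s - 1 ≠ 0 := sub_ne_zero.mpr hs
  have geom : (∑ m ∈ Finset.range M, (2 - s) ^ m) * (s - 1) = 1 - (2 - s) ^ M := by
    rw [show s - 1 = 1 - (2 - s) by ring, geom_sum_mul_neg]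
  have head : ∑ m ∈ Finset.range M, (b m - lam) * (2 - s) ^ m =
      ∑ m ∈ Finset.range M, b m * (2 - s) ^ m - lam * (1 - (2 - s) ^ M) / (s - 1) := by
    simp_rw [← geom, sub_mul, Finset.sum_sub_distrib, ← Finset.mul_sum]
    field_simp
  have split := hsum.summable.sum_add_tsum_nat_add M
  rw [hsum.tsum_eq, head] at split
  rw [truncatedExpansion]
  linear_combination -split

lemma abs_sub_truncatedExpansion_le {H g : ℝ} (hs : s ≠ 1) (hs1 : 19 / 20 ≤ s) (hs2 : s ≤ 2)
    (hb : ∀ m, |b m - lam| ≤ H * (3 / 4) ^ m)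
    (hsum : HasSum (fun m ↦ (b m - lam) * (2 - s) ^ m) (g - lam / (s - 1))) :
    |g - truncatedExpansion b lam M s| ≤ 5 * H * (4 / 5) ^ M := by
  have hH : 0 ≤ H := by simpa using (abs_nonneg _).trans (hb 0)
  have geom : HasSum (fun m : ℕ ↦ H * (4 / 5 : ℝ) ^ M * (4 / 5) ^ m) (5 * H * (4 / 5) ^ M) := by
    rw [show 5 * H * (4 / 5 : ℝ) ^ M = H * (4 / 5) ^ M * (1 - 4 / 5)⁻¹ by norm_num; ring]
    exact (hasSum_geometric_of_lt_one (by norm_num) (by norm_num)).mul_left _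
  rw [sub_truncatedExpansion_eq_tsum hs hsum, ← Real.norm_eq_abs]
  refine tsum_of_norm_bounded geom fun m ↦ ?_
  have h0 : 0 ≤ 2 - s := by linarith
  calc ‖(b (m + M) - lam) * (2 - s) ^ (m + M)‖
      = |b (m + M) - lam| * (2 - s) ^ (m + M) := by
        rw [Real.norm_eq_abs, abs_mul, abs_of_nonneg (pow_nonneg h0 _)]
    _ ≤ H * (3 / 4) ^ (m + M) * (2 - s) ^ (m + M) := by gcongr; exact hb _
    _ = H * (3 / 4 * (2 - s)) ^ (m + M) := by rw [mul_pow, mul_assoc]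
    _ ≤ H * (4 / 5) ^ (m + M) := by gcongr; linarith
    _ = H * (4 / 5) ^ M * (4 / 5) ^ m := by rw [pow_add]; ring

lemma truncatedExpansion_le_of_one_lt (hb : ∀ m, 0 ≤ b m) (hlam : 0 ≤ lam) (hs1 : 1 < s)
    (hs2 : s ≤ 2) :
    truncatedExpansion b lam M s ≤ ∑ m ∈ Finset.range M, b m + lam / (s - 1) := by
  have pow_le (m : ℕ) : (2 - s) ^ m ≤ 1 := pow_le_one₀ (by linarith) (by linarith)
  have : 0 ≤ s - 1 := by linarith
  rw [truncatedExpansion]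
  gcongr with m
  · exact mul_le_of_le_one_right (hb m) (pow_le m)
  · exact mul_le_of_le_one_right hlam (pow_le M)

lemma pow_mul_le_truncatedExpansion_of_one_lt (hb : ∀ m, 0 ≤ b m) (hs1 : 1 < s)
    (hs2 : s ≤ 2) : (2 - s) ^ M * (∑ m ∈ Finset.range M, b m + lam / (s - 1)) ≤
      truncatedExpansion b lam M s := by
  rw [truncatedExpansion, mul_add, Finset.mul_sum, ← mul_div_assoc, mul_comm _ lam]
  refine add_le_add (Finset.sum_le_sum fun m hm ↦ ?_) (by rw [mul_comm])
  rw [mul_comm]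
  exact mul_le_mul_of_nonneg_left
    (pow_le_pow_of_le_one (by linarith) (by linarith) (Finset.mem_range.mp hm).le) (hb m)

lemma le_truncatedExpansion_one_sub (hb : ∀ m, 0 ≤ b m) {δ : ℝ} (hδ : 0 ≤ δ) :
    ∑ m ∈ Finset.range M, b m - lam * (1 + δ) ^ M / δ ≤
      truncatedExpansion b lam M (1 - δ) := by
  rw [truncatedExpansion, show 2 - (1 - δ) = 1 + δ by ring, show 1 - δ - 1 = -δ by ring, div_neg,
    ← sub_eq_add_neg]
  gcongr with m
  exact le_mul_of_one_le_right (hb m) (one_le_pow₀ (by linarith))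

lemma truncatedExpansion_one_sub_le (hb : ∀ m, 0 ≤ b m) {δ : ℝ} (hδ : 0 ≤ δ) :
    truncatedExpansion b lam M (1 - δ) ≤
      (1 + δ) ^ M * (∑ m ∈ Finset.range M, b m - lam / δ) := by
  rw [truncatedExpansion, show 2 - (1 - δ) = 1 + δ by ring, show 1 - δ - 1 = -δ by ring, div_neg,
    ← sub_eq_add_neg, mul_sub, Finset.mul_sum, ← mul_div_assoc, mul_comm _ lam]
  refine sub_le_sub_right (Finset.sum_le_sum fun m hm ↦ ?_) _
  rw [mul_comm]
  exact mul_le_mul_of_nonneg_right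
    (pow_le_pow_right₀ (by linarith) (Finset.mem_range.mp hm).le) (hb m)

lemma one_le_sum_range (hb : ∀ m, 0 ≤ b m) (hb0 : 1 ≤ b 0) (hM : 0 < M) :
    1 ≤ ∑ m ∈ Finset.range M, b m :=
  hb0.trans (Finset.single_le_sum (fun m _ ↦ hb m) (Finset.mem_range.mpr hM))

variable {g : ℝ}

lemma le_of_near_truncatedExpansion (hb : ∀ m, 0 ≤ b m) (hb0 : 1 ≤ b 0) (hM : 0 < M)
    (hlam : 0 ≤ lam) (hs1 : 1 < s) (hs2 : s ≤ 2)
    (near : |g - truncatedExpansion b lam M s| ≤ 1 / 4) :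
    g ≤ 5 / 4 * (∑ m ∈ Finset.range M, b m + lam / (s - 1)) := by
  have := truncatedExpansion_le_of_one_lt (M := M) hb hlam hs1 hs2
  have := one_le_sum_range hb hb0 hM
  have : 0 ≤ lam / (s - 1) := div_nonneg hlam (by linarith)
  linarith [abs_le.mp near]

lemma pow_mul_le_of_near_truncatedExpansion (hb : ∀ m, 0 ≤ b m) (hs1 : 1 < s) (hs2 : s ≤ 2)
    (hg : 1 ≤ g) (near : |g - truncatedExpansion b lam M s| ≤ 1 / 4) :
    (2 - s) ^ M * (∑ m ∈ Finset.range M, b m + lam / (s - 1)) ≤ 5 / 4 * g := by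
  linarith [pow_mul_le_truncatedExpansion_of_one_lt (M := M) (lam := lam) hb hs1 hs2,
    abs_le.mp near]

lemma div_le_of_truncatedExpansion_near_zero (hb : ∀ m, 0 ≤ b m) (hb0 : 1 ≤ b 0) (hM : 0 < M)
    {δ : ℝ} (hδ : 0 ≤ δ) (near : |0 - truncatedExpansion b lam M (1 - δ)| ≤ 1 / 4) :
    lam / δ ≤ 5 / 4 * ∑ m ∈ Finset.range M, b m := by
  have upper := truncatedExpansion_one_sub_le (M := M) (lam := lam) hb hδ
  have one_le := one_le_sum_range hb hb0 hM
  have one_le_pow : 1 ≤ (1 + δ) ^ M := one_le_pow₀ (by linarith)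
  by_contra! h
  nlinarith [abs_le.mp near]

lemma sum_range_le_of_near_truncatedExpansion (hb : ∀ m, 0 ≤ b m) (hb0 : 1 ≤ b 0) (hM : 0 < M)
    {δ : ℝ} (hδ : 0 ≤ δ) (hg : g ≤ 0)
    (near : |g - truncatedExpansion b lam M (1 - δ)| ≤ 1 / 4) :
    ∑ m ∈ Finset.range M, b m ≤ 4 / 3 * (lam * (1 + δ) ^ M / δ) := by
  linarith [le_truncatedExpansion_one_sub (M := M) (lam := lam) hb hδ,
    one_le_sum_range hb hb0 hM, abs_le.mp near]

end TruncatedExpansion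

section LinearModel

lemma exists_truncation_length (C : ℝ) : ∃ A : ℝ, 0 ≤ A ∧ ∀ (N : ℕ) (l : ℝ), N ≠ 0 → 1 ≤ l →
    Real.log N ≤ l → ∃ M : ℕ, 0 < M ∧ M ≤ A * l ∧ C * N * (4 / 5) ^ M ≤ 1 := by
  obtain ⟨k, hk⟩ := pow_unbounded_of_one_lt ((|C| + 1) * Real.exp 1) (by norm_num : 1 < (5 / 4 : ℝ))
  refine ⟨2 * (k + 1), by positivity, fun N l hN hl hNl ↦
    ⟨(k + 1) * ⌈l⌉₊, by positivity, ?_, ?_⟩⟩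
  · have := Nat.ceil_lt_add_one (a := l) (by linarith)
    push_cast
    calc ((k : ℝ) + 1) * ⌈l⌉₊ ≤ (k + 1) * (2 * l) := by gcongr; linarith
      _ = 2 * (k + 1) * l := by ring
  · have N_le : (N : ℝ) ≤ Real.exp ⌈l⌉₊ := by
      rw [← Real.log_le_iff_le_exp (by positivity)]
      exact hNl.trans (Nat.le_ceil l)
    have : (4 / 5 : ℝ) ^ ((k + 1) * ⌈l⌉₊) = ((5 / 4) ^ ((k + 1) * ⌈l⌉₊))⁻¹ := by
      rw [← inv_pow]; norm_num
    rw [this, ← div_eq_mul_inv, div_le_one (by positivity)]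
    calc C * N ≤ (|C| + 1) * Real.exp ⌈l⌉₊ := by
          gcongr
          exact (le_abs_self C).trans (by linarith)
      _ ≤ (|C| + 1) ^ ⌈l⌉₊ * Real.exp ⌈l⌉₊ := by
          gcongr
          exact le_self_pow₀ (by linarith [abs_nonneg C]) (Nat.ceil_pos.mpr (by linarith)).ne'
      _ = ((|C| + 1) * Real.exp 1) ^ ⌈l⌉₊ := by rw [mul_pow, ← Real.exp_nat_mul, mul_one]
      _ ≤ ((5 / 4) ^ (k + 1)) ^ ⌈l⌉₊ := by
          gcongr
          exact hk.le.trans (pow_le_pow_right₀ (by norm_num) k.le_succ)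
      _ = (5 / 4) ^ ((k + 1) * ⌈l⌉₊) := by rw [pow_mul]

theorem exists_abs_zetaL_sub_truncatedExpansion_le : ∃ A : ℝ, 0 ≤ A ∧ ∀ (N : ℕ) [NeZero N]
    (χ : DirichletCharacter ℂ N) (l : ℝ), χ ≠ 1 → 1 ≤ l → Real.log N ≤ l → ∃ M : ℕ, 0 < M ∧
      M ≤ A * l ∧ ∀ s : ℝ, s ≠ 1 → 19 / 20 ≤ s → s ≤ 2 →
        |zetaL χ s - truncatedExpansion (zetaLCoeff χ) (χ.LFunction 1).re M s| ≤ 1 / 4 := by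
  obtain ⟨C, bound⟩ := exists_abs_zetaLCoeff_sub_le
  obtain ⟨A, hA, length⟩ := exists_truncation_length (20 * C)
  refine ⟨A, hA, fun N _ χ l hχ hl hNl ↦ ?_⟩
  obtain ⟨M, hM, hMl, tail_le⟩ := length N l (NeZero.ne N) hl hNl
  refine ⟨M, hM, hMl, fun s hs hs1 hs2 ↦ ?_⟩
  calc _ ≤ 5 * (C * N) * (4 / 5) ^ M :=
        abs_sub_truncatedExpansion_le hs hs1 hs2 (bound N χ hχ) (hasSum_zetaLCoeff hχ hs)
    _ ≤ 1 / 4 := by linarith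

lemma exists_riemannZeta_one_sub_re_neg : ∃ ε : ℝ, 0 < ε ∧ ∀ δ : ℝ, 0 < δ → δ ≤ ε →
    (riemannZeta ↑(1 - δ)).re < 0 := by
  have continuous : Continuous fun σ : ℝ ↦ (riemannZeta₁ ↑(1 - σ)).re :=
    continuous_re.comp (differentiable_riemannZeta₁.continuous.comp (by fun_prop))
  have near : ∀ᶠ δ : ℝ in 𝓝 0, 0 < (riemannZeta₁ ↑(1 - δ)).re :=
    continuous.continuousAt.eventually_const_lt (by simp)
  obtain ⟨ε, hε, ball⟩ := Metric.nhds_basis_closedBall.eventually_iff.mp near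
  refine ⟨ε, hε, fun δ hδ hδε ↦ ?_⟩
  have : (0 : ℝ) < (riemannZeta₁ ↑(1 - δ)).re := ball (by simpa [abs_of_pos hδ] using hδε)
  rw [riemannZeta_eq_inv_sub_mul (mod_cast (by linarith : 1 - δ ≠ 1)), ← ofReal_one,
    ← ofReal_sub, ← ofReal_inv, re_ofReal_mul, show (1 - δ - 1)⁻¹ = -δ⁻¹ by
      rw [sub_sub_cancel_left, inv_neg]]
  nlinarith [inv_pos.mpr hδ]

section zetaL

variable {N : ℕ} [NeZero N] {χ : DirichletCharacter ℂ N} {s : ℝ}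

lemma zetaL_eq_exp_mul_exp (hχ : χ ^ 2 = 1) (hs : 1 < s) :
    zetaL χ s = Real.exp (logZeta s) * Real.exp (logL χ s) := by
  rw [zetaL, riemannZeta_eq_exp_logZeta hs, LFunction_eq_exp_logL hχ hs, ← ofReal_mul, ofReal_re]

lemma zetaL_eq_mul_re (s : ℝ) :
    zetaL χ s = (riemannZeta s).re * (χ.LFunction s).re := by
  have : ((riemannZeta s).re : ℂ) = riemannZeta s :=
    conj_eq_iff_re.mp (by rw [← riemannZeta_conj, conj_ofReal])
  rw [zetaL, ← this, re_ofReal_mul, ofReal_re]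

end zetaL

/-- With constants `K` and `ε`, the function `L(s, χ)` near `s = 1` behaves like the linear function
`L(1, χ) + (s - 1) S`: it agrees with it up to a factor `K` for `1 < s ≤ 1 + 1 / l`, and to the left
of `1` its zeros and its sign are governed by the comparison of `L(1, χ)` with `δ S`. -/
structure IsLinearModel {N : ℕ} [NeZero N] (χ : DirichletCharacter ℂ N) (l K ε S : ℝ) : Prop where
  slope_pos : 0 < S
  exp_logL_le (s : ℝ) : 1 < s → s ≤ 1 + 1 / l →
    Real.exp (logL χ s) ≤ K * ((χ.LFunction 1).re + (s - 1) * S)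
  le_exp_logL (s : ℝ) : 1 < s → s ≤ 1 + 1 / l →
    (χ.LFunction 1).re + (s - 1) * S ≤ K * Real.exp (logL χ s)
  le_of_zero (δ : ℝ) : 0 < δ → δ ≤ ε → χ.LFunction ↑(1 - δ) = 0 →
    (χ.LFunction 1).re ≤ K * δ * S
  le_of_nonneg (δ : ℝ) : 0 < δ → δ ≤ ε → 0 ≤ (χ.LFunction ↑(1 - δ)).re →
    δ * S ≤ K * Real.exp (K * δ * l) * (χ.LFunction 1).re

lemma exp_neg_two_mul_le_one_sub {x : ℝ} (h0 : 0 ≤ x) (h1 : x ≤ 1 / 2) :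
    Real.exp (-(2 * x)) ≤ 1 - x := by
  have : 0 < 1 - x := by linarith
  rw [Real.exp_neg, inv_le_comm₀ (Real.exp_pos _) this]
  refine le_trans ?_ (Real.add_one_le_exp _)
  rw [inv_le_iff_one_le_mul₀ this]
  nlinarith

lemma exp_neg_le_two_sub_pow {A l s : ℝ} {M : ℕ} (hl : 2 ≤ l) (hM : M ≤ A * l)
    (hs1 : 1 < s) (hs2 : s ≤ 1 + 1 / l) : Real.exp (-(2 * A)) ≤ (2 - s) ^ M := by
  have inv_le : 1 / l ≤ 1 / 2 := one_div_le_one_div_of_le two_pos hl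
  have mul_le : M * (s - 1) ≤ A := by
    calc M * (s - 1) ≤ M * (1 / l) := by gcongr; linarith
      _ ≤ A * l * (1 / l) := by gcongr
      _ = A := by field_simp
  calc Real.exp (-(2 * A)) ≤ Real.exp (M * -(2 * (s - 1))) := by gcongr; linarith
    _ = Real.exp (-(2 * (s - 1))) ^ M := Real.exp_nat_mul _ _
    _ ≤ (2 - s) ^ M := by
      gcongr
      linarith [exp_neg_two_mul_le_one_sub (x := s - 1) (by linarith) (by linarith)]

lemma one_add_pow_le_exp {A l δ : ℝ} {M : ℕ} (hδ : 0 ≤ δ) (hM : M ≤ A * l) :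
    (1 + δ) ^ M ≤ Real.exp (A * δ * l) :=
  calc (1 + δ) ^ M ≤ Real.exp δ ^ M := by gcongr; linarith [Real.add_one_le_exp δ]
    _ = Real.exp (M * δ) := (Real.exp_nat_mul _ _).symm
    _ ≤ Real.exp (A * δ * l) := by
      rw [Real.exp_le_exp]
      linarith [mul_le_mul_of_nonneg_right hM hδ]

lemma exp_logL_le_mul {N : ℕ} [NeZero N] {χ : DirichletCharacter ℂ N} {s κ : ℝ} (hχ : χ ^ 2 = 1)
    (hs : 1 < s) (hκ : |logZeta s + Real.log (s - 1)| ≤ κ) :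
    Real.exp (logL χ s) ≤ Real.exp κ * ((s - 1) * zetaL χ s) := by
  have one_le : 1 ≤ Real.exp κ * ((s - 1) * Real.exp (logZeta s)) := by
    rw [← Real.exp_log (sub_pos.mpr hs), ← Real.exp_add, ← Real.exp_add, Real.one_le_exp_iff]
    linarith [abs_le.mp hκ]
  rw [zetaL_eq_exp_mul_exp hχ hs]
  linarith [mul_le_mul_of_nonneg_right one_le (Real.exp_pos (logL χ s)).le]

lemma mul_zetaL_le {N : ℕ} [NeZero N] {χ : DirichletCharacter ℂ N} {s κ : ℝ} (hχ : χ ^ 2 = 1)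
    (hs : 1 < s) (hκ : |logZeta s + Real.log (s - 1)| ≤ κ) :
    (s - 1) * zetaL χ s ≤ Real.exp κ * Real.exp (logL χ s) := by
  rw [zetaL_eq_exp_mul_exp hχ hs, ← mul_assoc, ← Real.exp_log (sub_pos.mpr hs), ← Real.exp_add]
  gcongr
  linarith [abs_le.mp hκ]

section NearTruncatedExpansion

variable {N : ℕ} [NeZero N] {χ : DirichletCharacter ℂ N} {s κ A : ℝ} {M : ℕ}

lemma exp_logL_le_linear (hχ2 : χ ^ 2 = 1) (hχ : χ ≠ 1) (hM : 0 < M) (hs1 : 1 < s) (hs2 : s ≤ 2)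
    (hκ : |logZeta s + Real.log (s - 1)| ≤ κ)
    (near : |zetaL χ s - truncatedExpansion (zetaLCoeff χ) (χ.LFunction 1).re M s| ≤ 1 / 4) :
    Real.exp (logL χ s) ≤ 5 / 4 * Real.exp κ *
      ((χ.LFunction 1).re + (s - 1) * ∑ m ∈ Finset.range M, zetaLCoeff χ m) := by
  have zetaL_le := le_of_near_truncatedExpansion (zetaLCoeff_nonneg hχ2)
    (one_le_zetaLCoeff_zero hχ2) hM (LFunction_one_re_pos hχ2 hχ).le hs1 hs2 near
  have : s - 1 ≠ 0 := by linarith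
  calc Real.exp (logL χ s) ≤ Real.exp κ * ((s - 1) * zetaL χ s) := exp_logL_le_mul hχ2 hs1 hκ
    _ ≤ Real.exp κ * ((s - 1) * (5 / 4 * (∑ m ∈ Finset.range M, zetaLCoeff χ m +
        (χ.LFunction 1).re / (s - 1)))) := by gcongr
    _ = _ := by field_simp; ring

lemma linear_le_exp_logL (hχ2 : χ ^ 2 = 1) (hχ : χ ≠ 1) (hs1 : 1 < s) (hs2 : s ≤ 2)
    (hκ : |logZeta s + Real.log (s - 1)| ≤ κ) (hA : Real.exp (-(2 * A)) ≤ (2 - s) ^ M)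
    (near : |zetaL χ s - truncatedExpansion (zetaLCoeff χ) (χ.LFunction 1).re M s| ≤ 1 / 4) :
    (χ.LFunction 1).re + (s - 1) * ∑ m ∈ Finset.range M, zetaLCoeff χ m ≤
      5 / 4 * Real.exp κ * Real.exp (2 * A) * Real.exp (logL χ s) := by
  have hb := zetaLCoeff_nonneg hχ2
  have le_zetaL := pow_mul_le_of_near_truncatedExpansion hb hs1 hs2 (one_le_zetaL hχ2 hs1) near
  have hL := LFunction_one_re_pos hχ2 hχ
  have hS : 0 ≤ ∑ m ∈ Finset.range M, zetaLCoeff χ m := Finset.sum_nonneg fun m _ ↦ hb m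
  have : 0 < s - 1 := by linarith
  rw [Real.exp_neg, inv_le_iff_one_le_mul₀ (Real.exp_pos _)] at hA
  calc _ = (s - 1) * (1 * (∑ m ∈ Finset.range M, zetaLCoeff χ m +
        (χ.LFunction 1).re / (s - 1))) := by field_simp; ring
    _ ≤ (s - 1) * ((2 - s) ^ M * Real.exp (2 * A) * (∑ m ∈ Finset.range M, zetaLCoeff χ m +
        (χ.LFunction 1).re / (s - 1))) := by gcongr
    _ = (s - 1) * Real.exp (2 * A) * ((2 - s) ^ M * (∑ m ∈ Finset.range M, zetaLCoeff χ m +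
        (χ.LFunction 1).re / (s - 1))) := by ring
    _ ≤ (s - 1) * Real.exp (2 * A) * (5 / 4 * zetaL χ s) := by gcongr
    _ = 5 / 4 * Real.exp (2 * A) * ((s - 1) * zetaL χ s) := by ring
    _ ≤ 5 / 4 * Real.exp (2 * A) * (Real.exp κ * Real.exp (logL χ s)) := by
      gcongr ?_ * ?_
      exact mul_zetaL_le hχ2 hs1 hκ
    _ = _ := by ring

variable {δ l : ℝ}

lemma LFunction_one_re_le_of_zero (hχ2 : χ ^ 2 = 1) (hM : 0 < M) (hδ : 0 < δ)
    (zero : χ.LFunction ↑(1 - δ) = 0)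
    (near : |zetaL χ (1 - δ) - truncatedExpansion (zetaLCoeff χ) (χ.LFunction 1).re M (1 - δ)| ≤
      1 / 4) :
    (χ.LFunction 1).re ≤ 5 / 4 * δ * ∑ m ∈ Finset.range M, zetaLCoeff χ m := by
  rw [zetaL_eq_mul_re, zero, zero_re, mul_zero] at near
  have := div_le_of_truncatedExpansion_near_zero (zetaLCoeff_nonneg hχ2)
    (one_le_zetaLCoeff_zero hχ2) hM hδ.le near
  rw [div_le_iff₀ hδ] at this
  linarith

lemma mul_sum_zetaLCoeff_le_of_nonneg (hχ2 : χ ^ 2 = 1) (hχ : χ ≠ 1) (hM : 0 < M)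
    (hMl : M ≤ A * l) (hδ : 0 < δ) (zeta_nonpos : (riemannZeta ↑(1 - δ)).re ≤ 0)
    (nonneg : 0 ≤ (χ.LFunction ↑(1 - δ)).re)
    (near : |zetaL χ (1 - δ) - truncatedExpansion (zetaLCoeff χ) (χ.LFunction 1).re M (1 - δ)| ≤
      1 / 4) :
    δ * ∑ m ∈ Finset.range M, zetaLCoeff χ m ≤
      4 / 3 * Real.exp (A * δ * l) * (χ.LFunction 1).re := by
  have hL := LFunction_one_re_pos hχ2 hχ
  have sum_le := sum_range_le_of_near_truncatedExpansion (zetaLCoeff_nonneg hχ2)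
    (one_le_zetaLCoeff_zero hχ2) hM hδ.le (by
      rw [zetaL_eq_mul_re]
      exact mul_nonpos_of_nonpos_of_nonneg zeta_nonpos nonneg) near
  calc _ ≤ δ * (4 / 3 * ((χ.LFunction 1).re * (1 + δ) ^ M / δ)) := by gcongr
    _ = 4 / 3 * (1 + δ) ^ M * (χ.LFunction 1).re := by field_simp
    _ ≤ _ := by
      gcongr
      exact one_add_pow_le_exp hδ.le hMl

end NearTruncatedExpansion

theorem isLinearModel_of_near {N : ℕ} [NeZero N] {χ : DirichletCharacter ℂ N} {l A κ ε : ℝ}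
    {M : ℕ} (hχ2 : χ ^ 2 = 1) (hχ : χ ≠ 1) (hl : 2 ≤ l) (hA : 0 ≤ A) (hM : 0 < M) (hMl : M ≤ A * l)
    (hκ : ∀ σ : ℝ, 1 < σ → σ ≤ 2 → |logZeta σ + Real.log (σ - 1)| ≤ κ) (hε : ε ≤ 1 / 20)
    (zeta_neg : ∀ δ : ℝ, 0 < δ → δ ≤ ε → (riemannZeta ↑(1 - δ)).re < 0)
    (near : ∀ s : ℝ, s ≠ 1 → 19 / 20 ≤ s → s ≤ 2 →
      |zetaL χ s - truncatedExpansion (zetaLCoeff χ) (χ.LFunction 1).re M s| ≤ 1 / 4) :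
    IsLinearModel χ l ((4 / 3 + A) * Real.exp κ * Real.exp (2 * A)) ε
      (∑ m ∈ Finset.range M, zetaLCoeff χ m) := by
  have hb := zetaLCoeff_nonneg hχ2
  have hb0 := one_le_zetaLCoeff_zero hχ2
  have hL := LFunction_one_re_pos hχ2 hχ
  have inv_le : 1 / l ≤ 1 / 2 := one_div_le_one_div_of_le two_pos hl
  have one_le_exp_κ := Real.one_le_exp ((abs_nonneg _).trans (hκ 2 one_lt_two le_rfl))
  have one_le_exp_A := Real.one_le_exp (by positivity : 0 ≤ 2 * A)
  have hS := one_le_sum_range hb hb0 hM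
  have le_K : 4 / 3 + A ≤ (4 / 3 + A) * Real.exp κ * Real.exp (2 * A) :=
    (le_mul_of_one_le_right (by positivity) one_le_exp_κ).trans
      (le_mul_of_one_le_right (by positivity) one_le_exp_A)
  refine ⟨by linarith, fun s hs1 hs2 ↦ ?_, fun s hs1 hs2 ↦ ?_, fun δ hδ hδε zero ↦ ?_,
    fun δ hδ hδε nonneg ↦ ?_⟩
  · have : 0 ≤ s - 1 := by linarith
    refine (exp_logL_le_linear hχ2 hχ hM hs1 (by linarith) (hκ s hs1 (by linarith))
      (near s hs1.ne' (by linarith) (by linarith))).trans ?_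
    rw [← mul_one (5 / 4 * Real.exp κ)]
    gcongr
    linarith
  · refine (linear_le_exp_logL hχ2 hχ hs1 (by linarith) (hκ s hs1 (by linarith))
      (exp_neg_le_two_sub_pow hl hMl hs1 hs2)
      (near s hs1.ne' (by linarith) (by linarith))).trans ?_
    gcongr
    linarith
  · refine (LFunction_one_re_le_of_zero hχ2 hM hδ zero
      (near (1 - δ) (by linarith) (by linarith) (by linarith))).trans ?_
    gcongr
    linarith
  · refine (mul_sum_zetaLCoeff_le_of_nonneg hχ2 hχ hM hMl hδ (zeta_neg δ hδ hδε).le nonneg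
      (near (1 - δ) (by linarith) (by linarith) (by linarith))).trans ?_
    gcongr <;> linarith

theorem exists_isLinearModel : ∃ K ε : ℝ, 0 < K ∧ 0 < ε ∧ ∀ (N : ℕ) [NeZero N]
    (χ : DirichletCharacter ℂ N) (l : ℝ), χ ^ 2 = 1 → χ ≠ 1 → 2 ≤ l → Real.log N ≤ l →
      ∃ S : ℝ, IsLinearModel χ l K ε S := by
  obtain ⟨A, hA, approx⟩ := exists_abs_zetaL_sub_truncatedExpansion_le
  obtain ⟨κ, hκ⟩ := exists_abs_logZeta_add_log_le
  obtain ⟨ε, hε, zeta_neg⟩ := exists_riemannZeta_one_sub_re_neg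
  refine ⟨(4 / 3 + A) * Real.exp κ * Real.exp (2 * A), min ε (1 / 20), by positivity,
    by positivity, fun N _ χ l hχ2 hχ hl hNl ↦ ?_⟩
  obtain ⟨M, hM, hMl, near⟩ := approx N χ l hχ (by linarith) hNl
  exact ⟨_, isLinearModel_of_near hχ2 hχ hl hA hM hMl hκ (min_le_right ..)
    (fun δ hδ hδε ↦ zeta_neg δ hδ (hδε.trans (min_le_left ..))) near⟩

end LinearModel

namespace IsLinearModel

variable {N : ℕ} [NeZero N] {χ : DirichletCharacter ℂ N} {l K ε S : ℝ}

lemma logL_le_add_of_le (model : IsLinearModel χ l K ε S) (hK : 0 < K) {s t : ℝ} (hs : 1 < s)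
    (hst : s ≤ t) (ht : t ≤ 1 + 1 / l) : logL χ s ≤ logL χ t + 2 * Real.log K := by
  have slope_pos := model.slope_pos
  rw [← Real.exp_le_exp, Real.exp_add, two_mul, Real.exp_add, Real.exp_log hK]
  calc Real.exp (logL χ s) ≤ K * ((χ.LFunction 1).re + (s - 1) * S) :=
        model.exp_logL_le s hs (hst.trans ht)
    _ ≤ K * ((χ.LFunction 1).re + (t - 1) * S) := by gcongr
    _ ≤ K * (K * Real.exp (logL χ t)) := by
      gcongr
      exact model.le_exp_logL t (hs.trans_le hst) ht
    _ = Real.exp (logL χ t) * (K * K) := by ring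

lemma logL_le_of_zero (model : IsLinearModel χ l K ε S) (hK : 0 < K) (hl : 0 < l)
    (hL : 0 ≤ (χ.LFunction 1).re) {δ s : ℝ} (hδ : 0 < δ) (hδε : δ ≤ ε)
    (zero : χ.LFunction ↑(1 - δ) = 0) (hδs : δ ≤ s - 1) (hs : s ≤ 1 + 1 / l) :
    logL χ s ≤ logL χ (1 + 1 / l) + Real.log ((s - 1) * l) + Real.log (K ^ 2 * (K + 1)) := by
  have slope_pos := model.slope_pos
  have hs1 : 0 < s - 1 := hδ.trans_le hδs
  rw [← Real.exp_le_exp, Real.exp_add, Real.exp_add, Real.exp_log (by positivity),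
    Real.exp_log (by positivity)]
  calc Real.exp (logL χ s) ≤ K * ((χ.LFunction 1).re + (s - 1) * S) :=
        model.exp_logL_le s (by linarith) hs
    _ ≤ K * (K * (s - 1) * S + (s - 1) * S) := by
      gcongr
      exact (model.le_of_zero δ hδ hδε zero).trans (by gcongr)
    _ = K * (K + 1) * ((s - 1) * l) * (0 + (1 + 1 / l - 1) * S) := by field_simp; ring
    _ ≤ K * (K + 1) * ((s - 1) * l) * ((χ.LFunction 1).re + (1 + 1 / l - 1) * S) := by gcongr
    _ ≤ K * (K + 1) * ((s - 1) * l) * (K * Real.exp (logL χ (1 + 1 / l))) := by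
      gcongr
      exact model.le_exp_logL _ (by simpa using hl) le_rfl
    _ = _ := by ring

lemma exp_logL_le_of_nonneg (model : IsLinearModel χ l K ε S) (hK : 0 < K) (hl : 0 < l) {c : ℝ}
    (hc : 0 < c) (hcε : c / l ≤ ε) (nonneg : 0 ≤ (χ.LFunction ↑(1 - c / l)).re) :
    Real.exp (logL χ (1 + 1 / l)) ≤ K * (1 + K * Real.exp (K * c) / c) * (χ.LFunction 1).re := by
  have slope_le := model.le_of_nonneg (c / l) (by positivity) hcε nonneg
  rw [show K * (c / l) * l = K * c by field_simp] at slope_le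
  calc Real.exp (logL χ (1 + 1 / l)) ≤ K * ((χ.LFunction 1).re + (1 + 1 / l - 1) * S) :=
        model.exp_logL_le _ (by simpa using hl) le_rfl
    _ = K * ((χ.LFunction 1).re + c / l * S / c) := by field_simp; ring
    _ ≤ K * ((χ.LFunction 1).re + K * Real.exp (K * c) * (χ.LFunction 1).re / c) := by gcongr
    _ = _ := by ring

end IsLinearModel

section LogLComparison

theorem exists_logL_le_add : ∃ κ : ℝ, ∀ (N : ℕ) [NeZero N] (χ : DirichletCharacter ℂ N)
    (l s t : ℝ), χ ^ 2 = 1 → χ ≠ 1 → 2 ≤ l → Real.log N ≤ l → 1 < s → s ≤ t → t ≤ 1 + 1 / l →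
      logL χ s ≤ logL χ t + κ := by
  obtain ⟨K, ε, hK, -, model⟩ := exists_isLinearModel
  refine ⟨2 * Real.log K, fun N _ χ l s t hχ2 hχ hl hNl hs hst ht ↦ ?_⟩
  obtain ⟨S, hS⟩ := model N χ l hχ2 hχ hl hNl
  exact hS.logL_le_add_of_le hK hs hst ht

theorem exists_logL_le_of_zero : ∃ κ ε : ℝ, 0 < ε ∧ ∀ (N : ℕ) [NeZero N]
    (χ : DirichletCharacter ℂ N) (l δ s : ℝ), χ ^ 2 = 1 → χ ≠ 1 → 2 ≤ l → Real.log N ≤ l →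
      0 < δ → δ ≤ ε → χ.LFunction ↑(1 - δ) = 0 → δ ≤ s - 1 → s ≤ 1 + 1 / l →
        logL χ s ≤ logL χ (1 + 1 / l) + Real.log ((s - 1) * l) + κ := by
  obtain ⟨K, ε, hK, hε, model⟩ := exists_isLinearModel
  refine ⟨Real.log (K ^ 2 * (K + 1)), ε, hε,
    fun N _ χ l δ s hχ2 hχ hl hNl hδ hδε zero hδs hs ↦ ?_⟩
  obtain ⟨S, hS⟩ := model N χ l hχ2 hχ hl hNl
  exact hS.logL_le_of_zero hK (by linarith) (LFunction_one_re_pos hχ2 hχ).le hδ hδε zero hδs hs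

theorem exists_exp_logL_sub_le : ∃ c₀ : ℝ, 0 < c₀ ∧ ∀ c : ℝ, 0 < c → c ≤ c₀ → ∃ κ : ℝ,
    ∀ (N : ℕ) [NeZero N] (χ : DirichletCharacter ℂ N) (l : ℝ), χ ^ 2 = 1 → χ ≠ 1 → 2 ≤ l →
      Real.log N ≤ l → (¬∃ β : ℝ, χ.LFunction β = 0 ∧ 1 - c / l < β) →
        Real.exp (logL χ (1 + 1 / l) - κ) ≤ (χ.LFunction 1).re := by
  obtain ⟨K, ε, hK, hε, model⟩ := exists_isLinearModel
  refine ⟨min ε 1, by positivity, fun c hc hcε ↦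
    ⟨Real.log (K * (1 + K * Real.exp (K * (c / 2)) / (c / 2))),
      fun N _ χ l hχ2 hχ hl hNl no_zero ↦ ?_⟩⟩
  have hc2 : 0 < c / 2 := half_pos hc
  have half_lt : c / 2 / l < c / l := by gcongr; exact half_lt_self hc
  have div_le : c / l ≤ c := div_le_self hc.le (by linarith)
  have pos : 0 < (χ.LFunction ↑(1 - c / 2 / l)).re :=
    LFunction_re_pos_of_forall_ne_zero hχ2 hχ
      (by linarith [hcε.trans (min_le_right ..)]) fun y hy zero ↦ no_zero ⟨y, zero, by linarith⟩
  obtain ⟨S, hS⟩ := model N χ l hχ2 hχ hl hNl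
  rw [Real.exp_sub, Real.exp_log (by positivity), div_le_iff₀' (by positivity)]
  exact hS.exp_logL_le_of_nonneg hK (by linarith) hc2
    (by linarith [hcε.trans (min_le_left ..)]) pos.le

end LogLComparison

section Moments

open scoped BigOperators

lemma hasSum_logL_sq {N : ℕ} {χ : DirichletCharacter ℂ N} {σ : ℝ} (hχ : χ ^ 2 = 1)
    (hσ : 1 < σ) :
    HasSum (fun z : ℕ × ℕ ↦
      logZetaTerm σ z.1 * logZetaTerm σ z.2 * (χ ((z.1 * z.2 : ℕ) : ZMod N)).re)
      (logL χ σ ^ 2) := by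
  have abs_summable : Summable fun n : ℕ ↦ ‖logZetaTerm σ n * (χ n).re‖ :=
    .of_nonneg_of_le (fun _ ↦ norm_nonneg _) (abs_logL_term_le χ σ) (summable_logZetaTerm hσ)
  have product := (summable_mul_of_summable_norm abs_summable abs_summable).hasSum
  rw [← tsum_mul_tsum_of_summable_norm abs_summable abs_summable, (hasSum_logL χ hσ).tsum_eq,
    ← pow_two] at product
  refine product.congr_fun fun z ↦ ?_
  rw [Nat.cast_mul, map_mul, ← ofReal_re_character hχ z.1, ← ofReal_re_character hχ z.2,
    ← ofReal_mul]
  simp only [ofReal_re]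
  ring

/-- The group of Dirichlet characters `χ` modulo `N` with `χ² = χ₀`, as a finset. Unlike the
quadratic characters of the literature, it includes the trivial character. -/
def quadraticCharacters (N : ℕ) [NeZero N] : Finset (DirichletCharacter ℂ N) :=
  (Set.toFinite {χ : DirichletCharacter ℂ N | χ ^ 2 = 1}).toFinset

/-- The average of the values `χ(a)` over the characters `χ` modulo `N` with `χ² = χ₀`. -/
def characterMean (N : ℕ) [NeZero N] (a : ZMod N) : ℝ :=
  𝔼 χ ∈ quadraticCharacters N, (χ a).re

variable {N : ℕ} [NeZero N] {χ : DirichletCharacter ℂ N} {σ τ : ℝ}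

@[simp]
lemma mem_quadraticCharacters : χ ∈ quadraticCharacters N ↔ χ ^ 2 = 1 := by
  simp [quadraticCharacters]

lemma quadraticCharacters_nonempty : (quadraticCharacters N).Nonempty :=
  ⟨1, by simp⟩

lemma card_quadraticCharacters_pos : (0 : ℝ) < (quadraticCharacters N).card :=
  Nat.cast_pos.mpr quadraticCharacters_nonempty.card_pos

lemma characterMean_eq_one {a : ZMod N} (h : ∀ χ ∈ quadraticCharacters N, χ a = 1) :
    characterMean N a = 1 := by
  rw [characterMean, Finset.expect_congr rfl fun χ hχ ↦ by rw [h χ hχ, one_re],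
    Finset.expect_const quadraticCharacters_nonempty]

lemma characterMean_eq_zero_of_apply_eq_neg_one {a : ZMod N} (hχ : χ ^ 2 = 1) (ha : χ a = -1) :
    characterMean N a = 0 := by
  have mul_mul_cancel (ψ : DirichletCharacter ℂ N) : χ * (χ * ψ) = ψ := by
    rw [← mul_assoc, ← pow_two, hχ, one_mul]
  have mul_mem {ψ : DirichletCharacter ℂ N} (hψ : ψ ∈ quadraticCharacters N) :
      χ * ψ ∈ quadraticCharacters N := by
    rw [mem_quadraticCharacters] at hψ ⊢
    rw [mul_pow, hχ, hψ, one_mul]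
  have mean_eq_neg : characterMean N a = -characterMean N a :=
    calc characterMean N a = 𝔼 ψ ∈ quadraticCharacters N, ((χ * ψ) a).re :=
          Finset.expect_nbij' (χ * ·) (χ * ·) (fun _ ↦ mul_mem) (fun _ ↦ mul_mem)
            (fun ψ _ ↦ mul_mul_cancel ψ) (fun ψ _ ↦ mul_mul_cancel ψ)
            fun ψ _ ↦ by rw [mul_mul_cancel]
      _ = -characterMean N a := by
          rw [characterMean, ← Finset.expect_neg_distrib]
          exact Finset.expect_congr rfl fun ψ _ ↦ by rw [MulChar.mul_apply, ha, neg_one_mul, neg_re]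
  linarith

lemma characterMean_eq_zero_of_ne_one {a : ZMod N} (hχ : χ ^ 2 = 1) (ha : χ a ≠ 1) :
    characterMean N a = 0 := by
  rcases MulChar.isQuadratic_iff_sq_eq_one.mpr hχ a with h0 | h1 | h_neg
  · have not_unit : ¬IsUnit a := fun hu ↦ (hu.map χ).ne_zero h0
    exact Finset.expect_eq_zero fun ψ _ ↦ by rw [MulChar.map_nonunit ψ not_unit, zero_re]
  · exact absurd h1 ha
  · exact characterMean_eq_zero_of_apply_eq_neg_one hχ h_neg

lemma characterMean_eq_one_or_eq_zero (a : ZMod N) :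
    (∀ χ ∈ quadraticCharacters N, χ a = 1) ∨ characterMean N a = 0 := by
  refine or_iff_not_imp_left.mpr fun h ↦ ?_
  push Not at h
  obtain ⟨χ, hχ, ha⟩ := h
  exact characterMean_eq_zero_of_ne_one (mem_quadraticCharacters.mp hχ) ha

lemma characterMean_nonneg (a : ZMod N) : 0 ≤ characterMean N a := by
  rcases characterMean_eq_one_or_eq_zero a with h | h
  · exact zero_le_one.trans_eq (characterMean_eq_one h).symm
  · exact h.ge

lemma characterMean_le_of_dvd {M : ℕ} [NeZero M] (hMN : M ∣ N) (n : ℕ) :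
    characterMean N n ≤ characterMean M n := by
  rcases characterMean_eq_one_or_eq_zero (n : ZMod N) with h | h
  · have coprime : IsUnit (n : ZMod N) := by
      by_contra hn
      simpa [MulChar.map_nonunit _ hn] using h 1 (by simp)
    have eq_one_of_mem (ψ : DirichletCharacter ℂ M) (hψ : ψ ∈ quadraticCharacters M) :
        ψ n = 1 := by
      have lift_apply := DirichletCharacter.changeLevel_eq_cast_of_dvd ψ hMN coprime.unit
      simp only [IsUnit.unit_spec, ZMod.cast_natCast hMN] at lift_apply
      rw [← lift_apply]
      refine h _ (mem_quadraticCharacters.mpr ?_)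
      rw [← map_pow, mem_quadraticCharacters.mp hψ, map_one]
    rw [characterMean_eq_one h, characterMean_eq_one eq_one_of_mem]
  · exact h.trans_le (characterMean_nonneg _)

lemma hasSum_expect_logL (hσ : 1 < σ) :
    HasSum (fun n : ℕ ↦ logZetaTerm σ n * characterMean N n)
      (𝔼 χ ∈ quadraticCharacters N, logL χ σ) := by
  simp only [characterMean, Finset.expect_eq_sum_div_card, ← mul_div_assoc, Finset.mul_sum]
  exact (hasSum_sum fun χ _ ↦ hasSum_logL χ hσ).div_const _

lemma expect_logL_nonneg (hσ : 1 < σ) : 0 ≤ 𝔼 χ ∈ quadraticCharacters N, logL χ σ :=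
  (hasSum_expect_logL hσ).nonneg fun n ↦
    mul_nonneg (logZetaTerm_nonneg σ n) (characterMean_nonneg _)

lemma expect_logL_anti (hτ : 1 < τ) (hτσ : τ ≤ σ) :
    𝔼 χ ∈ quadraticCharacters N, logL χ σ ≤ 𝔼 χ ∈ quadraticCharacters N, logL χ τ :=
  hasSum_le
    (fun n ↦ mul_le_mul_of_nonneg_right (antitone_logZetaTerm n hτσ) (characterMean_nonneg _))
    (hasSum_expect_logL (hτ.trans_le hτσ)) (hasSum_expect_logL hτ)

lemma hasSum_expect_logL_sq (hσ : 1 < σ) :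
    HasSum (fun z : ℕ × ℕ ↦
      logZetaTerm σ z.1 * logZetaTerm σ z.2 * characterMean N ((z.1 * z.2 : ℕ) : ZMod N))
      (𝔼 χ ∈ quadraticCharacters N, logL χ σ ^ 2) := by
  simp only [characterMean, Finset.expect_eq_sum_div_card, ← mul_div_assoc, Finset.mul_sum]
  exact (hasSum_sum fun χ hχ ↦ hasSum_logL_sq (mem_quadraticCharacters.mp hχ) hσ).div_const _

lemma expect_logL_sq_le_of_dvd {M : ℕ} [NeZero M] (hMN : M ∣ N) (hσ : 1 < σ) :
    𝔼 χ ∈ quadraticCharacters N, logL χ σ ^ 2 ≤ 𝔼 χ ∈ quadraticCharacters M, logL χ σ ^ 2 :=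
  hasSum_le
    (fun _ ↦ mul_le_mul_of_nonneg_left (characterMean_le_of_dvd hMN _)
      (mul_nonneg (logZetaTerm_nonneg _ _) (logZetaTerm_nonneg _ _)))
    (hasSum_expect_logL_sq hσ) (hasSum_expect_logL_sq hσ)

lemma expect_ite_eq_one (x : ℝ) :
    𝔼 χ ∈ quadraticCharacters N, (if χ = 1 then x else 0) = x / (quadraticCharacters N).card := by
  rw [Finset.expect_eq_sum_div_card, Finset.sum_ite_eq', if_pos (by simp)]

-- As the mean of `logL` is nonnegative, `|x| = 2x⁺ - x` turns a one-sided bound on `logL` into a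
-- bound for its `L¹` norm.
lemma expect_abs_logL_le {U : ℝ} (hσ : 1 < σ) (hU : 0 ≤ U)
    (logL_le : ∀ χ ∈ quadraticCharacters N, χ ≠ 1 → logL χ σ ≤ U) :
    𝔼 χ ∈ quadraticCharacters N, |logL χ σ| ≤
      2 * (U + logZeta σ / (quadraticCharacters N).card) := by
  have abs_le_majorant : ∀ χ ∈ quadraticCharacters N,
      |logL χ σ| ≤ 2 * (U + if χ = 1 then logZeta σ else 0) - logL χ σ := by
    intro χ hχ
    have logL_bounds := abs_le.mp (abs_logL_le χ hσ)
    split_ifs with h1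
    · exact abs_le.mpr ⟨by linarith, by linarith⟩
    · exact abs_le.mpr ⟨by linarith, by linarith [logL_le χ hχ h1]⟩
  have majorant := Finset.expect_le_expect abs_le_majorant
  rw [Finset.expect_sub_distrib, ← Finset.mul_expect, Finset.expect_add_distrib,
    Finset.expect_const quadraticCharacters_nonempty, expect_ite_eq_one] at majorant
  linarith [expect_logL_nonneg (N := N) hσ]

lemma expect_logL_sq_le {U : ℝ} (hσ : 1 < σ) (hU : 0 ≤ U)
    (logL_le : ∀ χ ∈ quadraticCharacters N, χ ≠ 1 → logL χ σ ≤ U) :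
    𝔼 χ ∈ quadraticCharacters N, logL χ σ ^ 2 ≤
      2 * logZeta σ * (U + logZeta σ / (quadraticCharacters N).card) := by
  calc 𝔼 χ ∈ quadraticCharacters N, logL χ σ ^ 2
      ≤ 𝔼 χ ∈ quadraticCharacters N, logZeta σ * |logL χ σ| := by
        refine Finset.expect_le_expect fun χ _ ↦ ?_
        rw [← sq_abs, pow_two]
        exact mul_le_mul_of_nonneg_right (abs_logL_le χ hσ) (abs_nonneg _)
    _ = logZeta σ * 𝔼 χ ∈ quadraticCharacters N, |logL χ σ| := (Finset.mul_expect ..).symm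
    _ ≤ logZeta σ * (2 * (U + logZeta σ / (quadraticCharacters N).card)) :=
        mul_le_mul_of_nonneg_left (expect_abs_logL_le hσ hU logL_le) (logZeta_nonneg σ)
    _ = _ := by ring

end Moments

section ExceptionalCharacters

lemma logL_sub_logL_le {N : ℕ} (χ : DirichletCharacter ℂ N) {σ τ : ℝ} (hτ : 1 < τ) (hτσ : τ ≤ σ) :
    logL χ τ - logL χ σ ≤ logZeta τ - logZeta σ := by
  have hσ : 1 < σ := hτ.trans_le hτσ
  refine hasSum_le (fun n ↦ ?_) ((hasSum_logL χ hτ).sub (hasSum_logL χ hσ))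
    ((summable_logZetaTerm hτ).hasSum.sub (summable_logZetaTerm hσ).hasSum)
  rw [← sub_mul]
  exact mul_le_of_le_one_right (sub_nonneg.mpr (antitone_logZetaTerm n hτσ))
    ((le_abs_self _).trans (abs_re_character_le χ _))

lemma exists_logL_sub_logL_le_sub_log :
    ∃ κ : ℝ, ∀ {N : ℕ} (χ : DirichletCharacter ℂ N) {a l : ℝ}, 0 < a → a ≤ 1 → 2 ≤ l →
      logL χ (1 + a / l) - logL χ (1 + 1 / l) ≤ κ - Real.log a := by
  obtain ⟨κ, hκ⟩ := exists_abs_logZeta_add_log_le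
  refine ⟨2 * κ, fun χ a l ha ha1 hl ↦ ?_⟩
  have hl0 : 0 < l := by linarith
  have div_pos_of_pos : 0 < a / l := by positivity
  have div_le_div : a / l ≤ 1 / l := by gcongr
  have inv_le_one : 1 / l ≤ 1 := (div_le_one hl0).mpr (by linarith)
  have at_left := (abs_le.mp (hκ (1 + a / l) (by linarith) (by linarith))).2
  have at_right := (abs_le.mp (hκ (1 + 1 / l) (by linarith) (by linarith))).1
  rw [add_sub_cancel_left, Real.log_div ha.ne' hl0.ne'] at at_left
  rw [add_sub_cancel_left, Real.log_div one_ne_zero hl0.ne', Real.log_one] at at_right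
  linarith [logL_sub_logL_le χ (show 1 < 1 + a / l by linarith) (add_le_add_right div_le_div 1)]

lemma exists_logL_sub_logL_bounds :
    ∃ K a c₁ : ℝ, 0 < K ∧ 0 < a ∧ a ≤ 1 ∧ 0 < c₁ ∧
      ∀ (N : ℕ) [NeZero N] (χ : DirichletCharacter ℂ N) (l : ℝ), 2 ≤ l → Real.log N ≤ l →
        logL χ (1 + a / l) - logL χ (1 + 1 / l) ≤ 5 * K ∧
        (χ ^ 2 = 1 → χ ≠ 1 → logL χ (1 + a / l) - logL χ (1 + 1 / l) ≤ K) ∧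
        ∀ c ≤ c₁, χ ^ 2 = 1 → χ ≠ 1 → (∃ β : ℝ, χ.LFunction β = 0 ∧ 1 - c / l < β) →
          logL χ (1 + a / l) - logL χ (1 + 1 / l) ≤ -(3 * K) := by
  obtain ⟨κ₀, trivial_bound⟩ := exists_logL_sub_logL_le_sub_log
  obtain ⟨κ₁, quasi_mono⟩ := exists_logL_le_add
  obtain ⟨κ₂, ε, hε, zero_bound⟩ := exists_logL_le_of_zero
  obtain ⟨K, hK, hκ₀, hκ₁, hκ₂⟩ : ∃ K : ℝ, 0 < K ∧ κ₀ ≤ K ∧ κ₁ ≤ K ∧ κ₂ ≤ K :=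
    ⟨max 1 (max κ₀ (max κ₁ κ₂)), by simp, by simp, by simp, by simp⟩
  have a_pos := Real.exp_pos (-(4 * K))
  have a_le_one : Real.exp (-(4 * K)) ≤ 1 := Real.exp_le_one_iff.mpr (by linarith)
  have log_a := Real.log_exp (-(4 * K))
  generalize Real.exp (-(4 * K)) = a at a_pos a_le_one log_a
  refine ⟨K, a, min a ε, hK, a_pos, a_le_one, lt_min a_pos hε, fun N _ χ l hl hNl ↦ ?_⟩
  have hl0 : 0 < l := by linarith
  have one_lt_left : 1 < 1 + a / l := lt_add_of_pos_right 1 (by positivity)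
  have left_le_right : 1 + a / l ≤ 1 + 1 / l := by gcongr
  refine ⟨by linarith [trivial_bound χ a_pos a_le_one hl], fun hχ2 hχ ↦ ?_,
    fun c hc hχ2 hχ ⟨β, hβ, hcβ⟩ ↦ ?_⟩
  · linarith [quasi_mono N χ l _ _ hχ2 hχ hl hNl one_lt_left left_le_right le_rfl]
  · have β_lt_one : β < 1 := by
      by_contra! one_le_β
      exact DirichletCharacter.LFunction_ne_zero_of_one_le_re χ (Or.inl hχ) (by simpa) hβ
    have δ_le : 1 - β ≤ min a ε / l := by linarith [div_le_div_of_nonneg_right hc hl0.le]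
    have δ_le_a : 1 - β ≤ a / l := δ_le.trans (by gcongr; exact min_le_left _ _)
    have δ_le_ε : 1 - β ≤ ε := δ_le.trans
      ((div_le_self (lt_min a_pos hε).le (by linarith)).trans (min_le_right _ _))
    have growth := zero_bound N χ l (1 - β) _ hχ2 hχ hl hNl (by linarith) δ_le_ε
      (by rwa [sub_sub_cancel]) (by rwa [add_sub_cancel_left]) left_le_right
    rw [add_sub_cancel_left, div_mul_cancel₀ a hl0.ne', log_a] at growth
    linarith

lemma card_le_four_mul_card_of_sum_nonneg {ι : Type*} {G V : Finset ι} {i₀ : ι} {y : ι → ℝ}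
    {K : ℝ} (hK : 0 < K) (hi₀ : i₀ ∈ G) (hVG : V ⊆ G) (hV : V.Nonempty)
    (sum_nonneg : 0 ≤ ∑ i ∈ G, y i) (le_at : y i₀ ≤ 5 * K) (le_on : ∀ i ∈ V, y i ≤ K)
    (le_off : ∀ i ∈ G, i ≠ i₀ → i ∉ V → y i ≤ -(3 * K)) : (G.card : ℝ) ≤ 4 * V.card := by
  classical
  have pointwise : ∀ i ∈ G,
      y i ≤ ((if i = i₀ then 8 * K else 0) + if i ∈ V then 4 * K else 0) - 3 * K := by
    intro i hi
    split_ifs with h h' h'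
    · linarith [h ▸ le_at]
    · linarith [h ▸ le_at]
    · linarith [le_on i h']
    · linarith [le_off i hi h h']
  have total := sum_nonneg.trans (Finset.sum_le_sum pointwise)
  rw [Finset.sum_sub_distrib, Finset.sum_add_distrib, Finset.sum_ite_eq', if_pos hi₀,
    Finset.sum_ite_mem, Finset.inter_eq_right.mpr hVG, Finset.sum_const, Finset.sum_const,
    nsmul_eq_mul, nsmul_eq_mul] at total
  have one_le_card : (1 : ℝ) ≤ V.card := by exact_mod_cast hV.card_pos
  have scaled : K * (3 * G.card) ≤ K * (3 * (4 * V.card)) := by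
    linarith [mul_le_mul_of_nonneg_left one_le_card hK.le]
  linarith [le_of_mul_le_mul_left scaled hK]

open scoped Classical in
/-- The quadratic characters modulo `N` whose `L`-function has no real zero exceeding `x`: the
set `V` of the theorem, for `x = 1 - c / log N`. -/
def zeroFreeCharacters (N : ℕ) [NeZero N] (x : ℝ) : Finset (DirichletCharacter ℂ N) :=
  {χ ∈ quadraticCharacters N | χ ≠ 1 ∧ ¬∃ β : ℝ, χ.LFunction β = 0 ∧ x < β}

variable {N : ℕ} [NeZero N] {χ : DirichletCharacter ℂ N}

lemma mem_zeroFreeCharacters {x : ℝ} :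
    χ ∈ zeroFreeCharacters N x ↔
      χ ^ 2 = 1 ∧ χ ≠ 1 ∧ ¬∃ β : ℝ, χ.LFunction β = 0 ∧ x < β := by
  classical rw [zeroFreeCharacters, Finset.mem_filter, mem_quadraticCharacters]

lemma zeroFreeCharacters_subset (x : ℝ) : zeroFreeCharacters N x ⊆ quadraticCharacters N :=
  fun _ hχ ↦ mem_quadraticCharacters.mpr (mem_zeroFreeCharacters.mp hχ).1

lemma exists_card_quadraticCharacters_le :
    ∃ c₁ : ℝ, 0 < c₁ ∧ ∀ c ≤ c₁, ∀ (N : ℕ) [NeZero N] (l : ℝ), 2 ≤ l → Real.log N ≤ l →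
      (zeroFreeCharacters N (1 - c / l)).Nonempty →
        ((quadraticCharacters N).card : ℝ) ≤ 4 * (zeroFreeCharacters N (1 - c / l)).card := by
  obtain ⟨K, a, c₁, hK, ha, ha1, hc₁, bounds⟩ := exists_logL_sub_logL_bounds
  refine ⟨c₁, hc₁, fun c hc N _ l hl hNl nonempty ↦ ?_⟩
  have : 0 < l := by linarith
  refine card_le_four_mul_card_of_sum_nonneg
    (y := fun χ ↦ logL χ (1 + a / l) - logL χ (1 + 1 / l)) (i₀ := 1) hK (by simp)
    (zeroFreeCharacters_subset _) nonempty ?_ (bounds N 1 l hl hNl).1 (fun χ hχ ↦ ?_)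
    fun χ hχ χ_ne_one χ_notMem ↦ ?_
  · have mean_anti := expect_logL_anti (N := N) (σ := 1 + 1 / l) (τ := 1 + a / l)
      (lt_add_of_pos_right 1 (by positivity)) (by gcongr)
    rw [Finset.expect_eq_sum_div_card, Finset.expect_eq_sum_div_card,
      div_le_div_iff_of_pos_right card_quadraticCharacters_pos] at mean_anti
    rw [Finset.sum_sub_distrib]
    linarith
  · obtain ⟨hχ2, χ_ne_one, -⟩ := mem_zeroFreeCharacters.mp hχ
    exact (bounds N χ l hl hNl).2.1 hχ2 χ_ne_one
  · have hχ2 := mem_quadraticCharacters.mp hχ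
    refine (bounds N χ l hl hNl).2.2 c hc hχ2 χ_ne_one ?_
    by_contra no_zero
    exact χ_notMem (mem_zeroFreeCharacters.mpr ⟨hχ2, χ_ne_one, no_zero⟩)

end ExceptionalCharacters

section CharacterCount

lemma card_quadraticCharacters (N : ℕ) [NeZero N] :
    (quadraticCharacters N).card = Nat.card {u : (ZMod N)ˣ // u ^ 2 = 1} := by
  obtain ⟨e⟩ := DirichletCharacter.mulEquiv_units ℂ N
  rw [← Nat.card_eq_finsetCard]
  refine Nat.card_congr (e.toEquiv.subtypeEquiv fun χ ↦ ?_)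
  rw [mem_quadraticCharacters, ← e.injective.eq_iff, map_pow, map_one]
  rfl

lemma card_sq_eq_one_units_mul {m n : ℕ} (h : m.Coprime n) :
    Nat.card {u : (ZMod (m * n))ˣ // u ^ 2 = 1} =
      Nat.card {u : (ZMod m)ˣ // u ^ 2 = 1} * Nat.card {u : (ZMod n)ˣ // u ^ 2 = 1} := by
  let e : (ZMod (m * n))ˣ ≃* (ZMod m)ˣ × (ZMod n)ˣ :=
    (Units.mapEquiv (ZMod.chineseRemainder h).toMulEquiv).trans MulEquiv.prodUnits
  rw [← Nat.card_prod]
  refine Nat.card_congr ((e.toEquiv.subtypeEquiv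
    (q := fun u ↦ u.1 ^ 2 = 1 ∧ u.2 ^ 2 = 1) fun u ↦ ?_).trans
      (Equiv.subtypeProdEquivProd (p := (· ^ 2 = 1)) (q := (· ^ 2 = 1))))
  rw [← e.injective.eq_iff, map_pow, map_one, Prod.ext_iff]
  rfl

lemma two_le_card_sq_eq_one_units {p : ℕ} (hp : p.Prime) (hp2 : p ≠ 2) :
    2 ≤ Nat.card {u : (ZMod p)ˣ // u ^ 2 = 1} := by
  have : Fact p.Prime := ⟨hp⟩
  have : Fact (2 < p) := ⟨hp.two_le.lt_of_ne' hp2⟩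
  have : Nontrivial {u : (ZMod p)ˣ // u ^ 2 = 1} :=
    ⟨⟨1, by simp⟩, ⟨-1, by simp⟩, fun h ↦
      ZMod.neg_one_ne_one (congrArg (fun u ↦ ((u.1 : (ZMod p)ˣ) : ZMod p)) h).symm⟩
  exact Finite.one_lt_card

lemma two_pow_card_le_card_sq_eq_one_units (S : Finset ℕ) (hS : ∀ p ∈ S, p.Prime ∧ p ≠ 2) :
    2 ^ S.card ≤ Nat.card {u : (ZMod (∏ p ∈ S, p))ˣ // u ^ 2 = 1} := by
  induction S using Finset.induction_on with
  | empty =>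
    change 1 ≤ Nat.card {u : (ZMod 1)ˣ // u ^ 2 = 1}
    have : Nonempty {u : (ZMod 1)ˣ // u ^ 2 = 1} := ⟨⟨1, by simp⟩⟩
    exact Nat.card_pos
  | insert p S hp ih =>
    obtain ⟨p_odd_prime, hS⟩ := Finset.forall_mem_insert .. |>.mp hS
    have coprime : p.Coprime (∏ r ∈ S, r) := Nat.Coprime.prod_right fun r hr ↦
      (Nat.coprime_primes p_odd_prime.1 (hS r hr).1).mpr (ne_of_mem_of_not_mem hr hp).symm
    rw [Finset.prod_insert hp, card_sq_eq_one_units_mul coprime, Finset.card_insert_of_notMem hp,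
      pow_succ']
    exact Nat.mul_le_mul (two_le_card_sq_eq_one_units p_odd_prime.1 p_odd_prime.2) (ih hS)

lemma omegaY_eq_card_filter (Y : ℝ) {D : ℤ} (hD : D ≠ 0) :
    omegaY Y D = (D.natAbs.primeFactors.filter fun p : ℕ ↦ (p : ℝ) ≤ Y).card := by
  rw [omegaY, ← Nat.card_eq_finsetCard]
  refine Nat.card_congr (Equiv.subtypeEquivRight fun p ↦ ?_)
  rw [Finset.mem_filter, Nat.mem_primeFactors, ← Int.natCast_dvd]
  have := Int.natAbs_ne_zero.mpr hD
  tauto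

lemma log_prod_le_card_mul_log {S : Finset ℕ} {Y : ℝ} (hS : ∀ p ∈ S, 0 < p ∧ (p : ℝ) ≤ Y) :
    Real.log (∏ p ∈ S, p : ℕ) ≤ S.card * Real.log Y := by
  rw [Nat.cast_prod, Real.log_prod fun p hp ↦ by exact_mod_cast (hS p hp).1.ne', ← nsmul_eq_mul]
  exact Finset.sum_le_card_nsmul _ _ _ fun p hp ↦
    Real.log_le_log (by exact_mod_cast (hS p hp).1) (hS p hp).2

lemma exists_dvd_log_le_two_pow_le_card {D : ℤ} (hD : D ≠ 0) {Y : ℝ} (hY : 1 ≤ Y) :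
    ∃ (Q : ℕ) (_ : NeZero Q), Q ∣ D.natAbs ∧ Real.log Q ≤ omegaY Y D * Real.log Y ∧
      2 ^ omegaY Y D ≤ 2 * (quadraticCharacters Q).card := by
  rw [omegaY_eq_card_filter Y hD]
  set S := D.natAbs.primeFactors.filter fun p : ℕ ↦ (p : ℝ) ≤ Y
  have prime_le {p : ℕ} (hp : p ∈ S.erase 2) : p.Prime ∧ (p : ℝ) ≤ Y :=
    (Finset.mem_filter.mp (Finset.mem_of_mem_erase hp)).imp_left Nat.prime_of_mem_primeFactors
  have Q_ne_zero : NeZero (∏ p ∈ S.erase 2, p) :=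
    ⟨Finset.prod_ne_zero_iff.mpr fun p hp ↦ (prime_le hp).1.ne_zero⟩
  refine ⟨∏ p ∈ S.erase 2, p, Q_ne_zero, ?_, ?_, ?_⟩
  · exact (Finset.prod_dvd_prod_of_subset _ _ _
      ((Finset.erase_subset 2 S).trans (Finset.filter_subset _ _))).trans
      (Nat.prod_primeFactors_dvd _)
  · refine (log_prod_le_card_mul_log fun p hp ↦ (prime_le hp).imp_left Nat.Prime.pos).trans ?_
    have := Real.log_nonneg hY
    gcongr
    exact Finset.erase_subset 2 S
  · rw [card_quadraticCharacters]
    calc 2 ^ S.card ≤ 2 ^ ((S.erase 2).card + 1) :=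
          Nat.pow_le_pow_right two_pos (Nat.le_add_of_sub_le Finset.pred_card_le_card_erase)
      _ = 2 * 2 ^ (S.erase 2).card := pow_succ' ..
      _ ≤ _ := Nat.mul_le_mul_left 2 (two_pow_card_le_card_sq_eq_one_units _ fun p hp ↦
          ⟨(prime_le hp).1, Finset.ne_of_mem_erase hp⟩)

end CharacterCount

section SecondMoment

open scoped BigOperators

lemma exists_logZeta_le_log_add :
    ∃ κ : ℝ, 0 < κ ∧ ∀ l : ℝ, 2 ≤ l → logZeta (1 + 1 / l) ≤ Real.log l + κ := by
  obtain ⟨κ, hκ⟩ := exists_abs_logZeta_add_log_le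
  refine ⟨max κ 1, by positivity, fun l hl ↦ ?_⟩
  have hl0 : 0 < l := by linarith
  have inv_le_one : 1 / l ≤ 1 := (div_le_one hl0).mpr (by linarith)
  have bound := (abs_le.mp (hκ (1 + 1 / l) (lt_add_of_pos_right 1 (by positivity))
    (by linarith))).2
  rw [add_sub_cancel_left, one_div, Real.log_inv] at bound
  rw [one_div]
  linarith [le_max_left κ 1]

lemma exists_logL_le_log_add :
    ∃ κ : ℝ, 0 < κ ∧ ∀ (N : ℕ) [NeZero N] (χ : DirichletCharacter ℂ N) (m l : ℝ),
      χ ^ 2 = 1 → χ ≠ 1 → 2 ≤ m → Real.log N ≤ m → 2 ≤ l →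
        logL χ (1 + 1 / l) ≤ Real.log m + κ := by
  obtain ⟨κ₀, hκ₀, logZeta_le⟩ := exists_logZeta_le_log_add
  obtain ⟨κ₁, quasi_mono⟩ := exists_logL_le_add
  refine ⟨κ₀ + |κ₁|, by positivity, fun N _ χ m l hχ2 hχ hm hNm hl ↦ ?_⟩
  have logL_le_logZeta {x : ℝ} (hx : 2 ≤ x) : logL χ (1 + 1 / x) ≤ Real.log x + κ₀ :=
    (le_abs_self _).trans ((abs_logL_le χ (lt_add_of_pos_right 1 (by positivity))).trans
      (logZeta_le x hx))
  rcases le_total m l with hml | hlm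
  · have shifted := quasi_mono N χ m (1 + 1 / l) (1 + 1 / m) hχ2 hχ hm hNm
      (lt_add_of_pos_right 1 (by positivity)) (by gcongr) le_rfl
    linarith [logL_le_logZeta hm, le_abs_self κ₁]
  · linarith [logL_le_logZeta hl, Real.log_le_log (by linarith) hlm, abs_nonneg κ₁]

lemma exists_expect_logL_sq_le_log :
    ∃ κ : ℝ, 0 < κ ∧ ∀ (N M : ℕ) [NeZero N] [NeZero M] (m l : ℝ),
      M ∣ N → 2 ≤ m → Real.log M ≤ m → 2 ≤ l →
        𝔼 χ ∈ quadraticCharacters N, logL χ (1 + 1 / l) ^ 2 ≤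
          2 * (Real.log l + κ) *
            (Real.log m + κ + (Real.log l + κ) / (quadraticCharacters M).card) := by
  obtain ⟨κ₀, hκ₀, logZeta_le⟩ := exists_logZeta_le_log_add
  obtain ⟨κ₁, hκ₁, logL_le⟩ := exists_logL_le_log_add
  refine ⟨κ₀ + κ₁, by positivity, fun N M _ _ m l hMN hm hMm hl ↦ ?_⟩
  have one_lt : 1 < 1 + 1 / l := lt_add_of_pos_right 1 (by positivity)
  have log_m_nonneg : 0 ≤ Real.log m := Real.log_nonneg (by linarith)
  have log_l_nonneg : 0 ≤ Real.log l := Real.log_nonneg (by linarith)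
  have zeta_nonneg := logZeta_nonneg (1 + 1 / l)
  have logZeta_le' : logZeta (1 + 1 / l) ≤ Real.log l + (κ₀ + κ₁) := by linarith [logZeta_le l hl]
  have moment_M := expect_logL_sq_le (N := M) (U := Real.log m + (κ₀ + κ₁)) one_lt (by positivity)
    fun χ hχ χ_ne_one ↦ by
      linarith [logL_le M χ m l (mem_quadraticCharacters.mp hχ) χ_ne_one hm hMm hl]
  refine (expect_logL_sq_le_of_dvd hMN one_lt).trans (moment_M.trans ?_)
  gcongr

end SecondMoment

section LogLScale

/-- The quantity `√((log (ω_Y(D) + 2) + log log Y) / log log |D| + 2 ^ (-ω_Y(D))) · log log |D|`: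
up to a constant, a bound for the root mean square of `log L(1 + 1 / (2 log |D|), χ)` over the
characters `χ` modulo `|D|` with `χ² = χ₀`. -/
def logLScale (Y : ℝ) (D : ℤ) : ℝ :=
  √((Real.log ((omegaY Y D : ℝ) + 2) + Real.log (Real.log Y)) / Real.log (Real.log |(D : ℝ)|) +
    2 ^ (-(omegaY Y D : ℝ))) * Real.log (Real.log |(D : ℝ)|)

lemma log_ge_of_three_le {x : ℝ} (hx : 3 ≤ x) : 12 / 11 ≤ Real.log x := by
  have exp_one_pow : Real.exp 1 ^ 12 ≤ 3 ^ 11 :=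
    (pow_le_pow_left₀ (Real.exp_pos 1).le Real.exp_one_lt_d9.le 12).trans (by norm_num)
  have log_three := Real.log_le_log (by positivity) exp_one_pow
  rw [Real.log_pow, Real.log_pow, Real.log_exp] at log_three
  push_cast at log_three
  linarith [Real.log_le_log (by norm_num) hx]

lemma log_log_ge_of_three_le {x : ℝ} (hx : 3 ≤ x) : 1 / 12 ≤ Real.log (Real.log x) := by
  have log_ge := log_ge_of_three_le hx
  calc (1 / 12 : ℝ) = 1 - (12 / 11)⁻¹ := by norm_num
    _ ≤ Real.log (12 / 11) := Real.one_sub_inv_le_log_of_pos (by norm_num)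
    _ ≤ Real.log (Real.log x) := Real.log_le_log (by norm_num) log_ge

variable {D : ℤ} {Y : ℝ}

lemma half_le_log_omegaY_add (D : ℤ) (hY : 3 ≤ Y) :
    1 / 2 ≤ Real.log ((omegaY Y D : ℝ) + 2) + Real.log (Real.log Y) := by
  have log_two_le : Real.log 2 ≤ Real.log ((omegaY Y D : ℝ) + 2) :=
    Real.log_le_log two_pos (by simp)
  linarith [Real.log_two_gt_d9, log_log_ge_of_three_le hY]

lemma logLScale_sq (hD : 3 ≤ |(D : ℝ)|) (hY : 3 ≤ Y) :
    logLScale Y D ^ 2 = Real.log (Real.log |(D : ℝ)|) *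
      ((Real.log ((omegaY Y D : ℝ) + 2) + Real.log (Real.log Y)) +
        Real.log (Real.log |(D : ℝ)|) * 2 ^ (-(omegaY Y D : ℝ))) := by
  have numerator_pos := half_le_log_omegaY_add D hY
  have logLog_pos := log_log_ge_of_three_le hD
  have logLog_ne_zero : Real.log (Real.log |(D : ℝ)|) ≠ 0 := by linarith
  rw [logLScale, mul_pow, Real.sq_sqrt]
  · field_simp
  · exact add_nonneg (div_nonneg (by linarith) (by linarith)) (by positivity)

lemma one_fifth_le_logLScale (hD : 3 ≤ |(D : ℝ)|) (hY : 3 ≤ Y) : 1 / 5 ≤ logLScale Y D := by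
  have logLog_ge := log_log_ge_of_three_le hD
  have scale_nonneg : 0 ≤ logLScale Y D := mul_nonneg (Real.sqrt_nonneg _) (by linarith)
  refine le_of_sq_le_sq ?_ scale_nonneg
  rw [logLScale_sq hD hY]
  calc (1 / 5 : ℝ) ^ 2 ≤ 1 / 12 * (1 / 2 + 0) := by norm_num
    _ ≤ _ := by
      gcongr
      · exact half_le_log_omegaY_add D hY
      · positivity

lemma log_rpow_eq_exp_logLScale (hD : 3 ≤ |(D : ℝ)|) (x : ℝ) :
    Real.log |(D : ℝ)| ^ (-(x * √((Real.log ((omegaY Y D : ℝ) + 2) + Real.log (Real.log Y)) /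
      Real.log (Real.log |(D : ℝ)|) + 2 ^ (-(omegaY Y D : ℝ))))) =
      Real.exp (-(x * logLScale Y D)) := by
  have log_ge := log_ge_of_three_le hD
  rw [Real.rpow_def_of_pos (by linarith), logLScale]
  ring_nf

lemma inv_card_le_two_mul_rpow {w n : ℕ} (hn : 0 < n) (h : 2 ^ w ≤ 2 * n) :
    (n : ℝ)⁻¹ ≤ 2 * 2 ^ (-(w : ℝ)) := by
  have h' : (2 : ℝ) ^ w ≤ 2 * n := by exact_mod_cast h
  rw [Real.rpow_neg two_pos.le, Real.rpow_natCast, ← div_eq_mul_inv, le_div_iff₀ (by positivity),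
    inv_mul_le_iff₀ (by positivity), mul_comm]
  exact h'

open scoped BigOperators in
lemma exists_expect_logL_sq_le_logLScale_sq :
    ∃ K : ℝ, ∀ (D : ℤ) [NeZero D.natAbs], 3 ≤ |(D : ℝ)| → ∀ Y : ℝ, 3 ≤ Y →
      𝔼 χ ∈ quadraticCharacters D.natAbs, logL χ (1 + 1 / (2 * Real.log |(D : ℝ)|)) ^ 2 ≤
        K * logLScale Y D ^ 2 := by
  obtain ⟨κ, hκ, moment_le⟩ := exists_expect_logL_sq_le_log
  set A := 13 + 12 * κ
  refine ⟨4 * A ^ 2, fun D _ hD Y hY ↦ ?_⟩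
  have D_ne_zero : D ≠ 0 := Int.natAbs_ne_zero.mp (NeZero.ne _)
  obtain ⟨Q, _, hQD, log_Q_le, two_pow_le⟩ :=
    exists_dvd_log_le_two_pow_le_card D_ne_zero (Y := Y) (by linarith)
  have inv_card_le := inv_card_le_two_mul_rpow quadraticCharacters_nonempty.card_pos two_pow_le
  have log_Y_ge := log_ge_of_three_le hY
  have log_D_ge := log_ge_of_three_le hD
  have B_ge := half_le_log_omegaY_add D hY
  have logLog_ge := log_log_ge_of_three_le hD
  have moment := moment_le D.natAbs Q ((omegaY Y D + 2) * Real.log Y) (2 * Real.log |(D : ℝ)|) hQD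
    (by nlinarith [(omegaY Y D).cast_nonneg (α := ℝ)]) (by linarith) (by linarith)
  rw [Real.log_mul two_ne_zero (by linarith), Real.log_mul (by positivity) (by linarith)] at moment
  rw [logLScale_sq hD hY]
  generalize Real.log (omegaY Y D + 2) + Real.log (Real.log Y) = B at *
  generalize Real.log (Real.log |(D : ℝ)|) = LL at *
  generalize (2 : ℝ) ^ (-(omegaY Y D : ℝ)) = t at *
  have LL_bound : Real.log 2 + LL + κ ≤ A * LL := by nlinarith [Real.log_two_lt_d9]
  have B_bound : B + κ ≤ 2 * A * B := by nlinarith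
  have LL_bound_nonneg : 0 ≤ Real.log 2 + LL + κ := by linarith [Real.log_two_gt_d9]
  calc _ ≤ _ := moment
    _ ≤ 2 * (A * LL) * (2 * A * B + A * LL * (2 * t)) := by
        rw [div_eq_mul_inv]
        gcongr
    _ = 4 * A ^ 2 * (LL * (B + LL * t)) := by ring

end LogLScale

section LargeDeviations

open scoped BigOperators

lemma exists_sq_le_logL_sq_of_LFunction_one_lt :
    ∃ c₀ : ℝ, 0 < c₀ ∧ ∀ c : ℝ, 0 < c → c ≤ c₀ →
      ∃ κ : ℝ, ∀ (N : ℕ) [NeZero N] (χ : DirichletCharacter ℂ N) (l y : ℝ),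
        2 ≤ l → Real.log N ≤ l → χ ∈ zeroFreeCharacters N (1 - c / l) → 0 ≤ y → κ ≤ y →
          (χ.LFunction 1).re < Real.exp (-y) → (y / 2) ^ 2 ≤ logL χ (1 + 1 / l) ^ 2 := by
  obtain ⟨c₀, hc₀, lower_bound⟩ := exists_exp_logL_sub_le
  refine ⟨c₀, hc₀, fun c hc hcc₀ ↦ ?_⟩
  obtain ⟨κ, hκ⟩ := lower_bound c hc hcc₀
  refine ⟨2 * κ, fun N _ χ l y hl hNl hχ hy hκy L_lt ↦ ?_⟩
  obtain ⟨hχ2, χ_ne_one, no_zero⟩ := mem_zeroFreeCharacters.mp hχ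
  have logL_lt : logL χ (1 + 1 / l) - κ < -y :=
    Real.exp_lt_exp.mp ((hκ N χ l hχ2 χ_ne_one hl hNl no_zero).trans_lt L_lt)
  rw [← neg_sq (logL χ _)]
  exact pow_le_pow_left₀ (by linarith) (by linarith) 2

lemma card_mul_le_card_mul_expect {ι : Type*} {W G : Finset ι} {f : ι → ℝ} {x : ℝ} (hWG : W ⊆ G)
    (hf : ∀ i ∈ G, 0 ≤ f i) (le_on : ∀ i ∈ W, x ≤ f i) : W.card * x ≤ G.card * 𝔼 i ∈ G, f i := by
  rw [← nsmul_eq_mul, ← nsmul_eq_mul, Finset.card_smul_expect]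
  exact (Finset.card_nsmul_le_sum W f x le_on).trans
    (Finset.sum_le_sum_of_subset_of_nonneg hWG fun i hi _ ↦ hf i hi)

lemma exists_card_LFunction_one_lt_mul_sq_le :
    ∃ c κ : ℝ, 0 < c ∧ ∀ (N : ℕ) [NeZero N] (l y : ℝ), 2 ≤ l → Real.log N ≤ l → 0 ≤ y → κ ≤ y →
      ((zeroFreeCharacters N (1 - c / l)).filter
          fun χ ↦ (χ.LFunction 1).re < Real.exp (-y)).card * (y / 2) ^ 2 ≤
        4 * (zeroFreeCharacters N (1 - c / l)).card *
          𝔼 χ ∈ quadraticCharacters N, logL χ (1 + 1 / l) ^ 2 := by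
  obtain ⟨c₀, hc₀, sq_le⟩ := exists_sq_le_logL_sq_of_LFunction_one_lt
  obtain ⟨c₁, hc₁, card_le⟩ := exists_card_quadraticCharacters_le
  obtain ⟨κ, hκ⟩ := sq_le (min c₀ c₁) (lt_min hc₀ hc₁) (min_le_left _ _)
  refine ⟨min c₀ c₁, κ, lt_min hc₀ hc₁, fun N _ l y hl hNl hy hκy ↦ ?_⟩
  set V := zeroFreeCharacters N (1 - min c₀ c₁ / l)
  rcases V.eq_empty_or_nonempty with V_empty | V_nonempty
  · simp [V_empty]
  refine (card_mul_le_card_mul_expect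
    ((Finset.filter_subset _ V).trans (zeroFreeCharacters_subset _))
    (fun χ _ ↦ sq_nonneg (logL χ (1 + 1 / l))) fun χ hχ ↦ ?_).trans ?_
  · obtain ⟨χ_mem, L_lt⟩ := Finset.mem_filter.mp hχ
    exact hκ N χ l y hl hNl χ_mem hy hκy L_lt
  · have := Finset.expect_nonneg (s := quadraticCharacters N)
      fun χ _ ↦ sq_nonneg (logL χ (1 + 1 / l))
    gcongr
    exact card_le _ (min_le_right _ _) N l hl hNl V_nonempty

lemma le_one_div_sq_mul_of_chebyshev {n v k C R K m : ℝ} (hC : 1 ≤ C) (hk : 0 < k) (hR : 0 < R)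
    (hn : 0 ≤ n) (hv : 0 ≤ v) (hKC : 16 * K ≤ C) (hm : m ≤ K * R ^ 2)
    (chebyshev : n * (k * C * R / 2) ^ 2 ≤ 4 * v * m) : n ≤ 1 / k ^ 2 * v := by
  rw [one_div_mul_eq_div, le_div_iff₀ (by positivity)]
  refine le_of_mul_le_mul_right ?_ (show 0 < C * R ^ 2 / 4 by positivity)
  calc n * k ^ 2 * (C * R ^ 2 / 4) ≤ n * k ^ 2 * (C ^ 2 * R ^ 2 / 4) := by
        gcongr
        exact le_self_pow₀ hC two_ne_zero
    _ = n * (k * C * R / 2) ^ 2 := by ring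
    _ ≤ 4 * v * (K * R ^ 2) := chebyshev.trans (by gcongr)
    _ = v * (16 * K * R ^ 2 / 4) := by ring
    _ ≤ v * (C * R ^ 2 / 4) := by gcongr

lemma exists_card_LFunction_one_lt_le :
    ∃ c C : ℝ, 0 < c ∧ 0 < C ∧ ∀ (D : ℤ) [NeZero D.natAbs], 3 ≤ |(D : ℝ)| →
      ∀ Y : ℝ, 3 ≤ Y → ∀ k : ℝ, 1 ≤ k →
        (((zeroFreeCharacters D.natAbs (1 - c / Real.log |(D : ℝ)|)).filter
            fun χ ↦ (χ.LFunction 1).re < Real.exp (-(k * C * logLScale Y D))).card : ℝ) ≤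
          1 / k ^ 2 * (zeroFreeCharacters D.natAbs (1 - c / Real.log |(D : ℝ)|)).card := by
  obtain ⟨c, κ, hc, chebyshev⟩ := exists_card_LFunction_one_lt_mul_sq_le
  obtain ⟨K, moment⟩ := exists_expect_logL_sq_le_logLScale_sq
  obtain ⟨C, one_le_C, hKC, hκC⟩ : ∃ C : ℝ, 1 ≤ C ∧ 16 * K ≤ C ∧ 5 * κ ≤ C :=
    ⟨max 1 (max (16 * K) (5 * κ)), by simp, by simp, by simp⟩
  refine ⟨c / 2, C, by positivity, by positivity, fun D _ hD Y hY k hk ↦ ?_⟩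
  rw [div_div]
  have log_D_ge := log_ge_of_three_le hD
  have R_ge := one_fifth_le_logLScale hD hY
  have R_pos : 0 < logLScale Y D := by linarith
  have κ_le : κ ≤ k * C * logLScale Y D :=
    calc κ ≤ 1 * C * (1 / 5) := by linarith
      _ ≤ k * C * logLScale Y D := by gcongr
  have deviation := chebyshev D.natAbs (2 * Real.log |(D : ℝ)|) (k * C * logLScale Y D)
    (by linarith) (by rw [Nat.cast_natAbs, Int.cast_abs]; linarith) (by positivity) κ_le
  exact le_one_div_sq_mul_of_chebyshev one_le_C (by linarith) R_pos (Nat.cast_nonneg _)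
    (Nat.cast_nonneg _) hKC (moment D hD Y hY) deviation

lemma one_sub_mul_card_le_natCard {α : Type*} {V : Finset α} {f : α → ℝ} {x y : ℝ}
    (h : ((V.filter fun i ↦ f i < y).card : ℝ) ≤ x * V.card) :
    (1 - x) * V.card ≤ Nat.card {i // i ∈ V ∧ y ≤ f i} := by
  have card_eq : Nat.card {i // i ∈ V ∧ y ≤ f i} = (V.filter fun i ↦ y ≤ f i).card := by
    rw [← Nat.card_eq_finsetCard]
    exact Nat.card_congr (Equiv.subtypeEquivRight fun i ↦ by rw [Finset.mem_filter])
  have card_split := Finset.card_filter_add_card_filter_not (s := V) fun i ↦ y ≤ f i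
  simp only [not_le] at card_split
  have card_split_real :
      ((V.filter fun i ↦ y ≤ f i).card : ℝ) + (V.filter fun i ↦ f i < y).card = V.card := by
    exact_mod_cast card_split
  rw [card_eq]
  linarith

end LargeDeviations

end Development

theorem statement_8_general :
    ∃ c C : ℝ, 0 < c ∧ 0 < C ∧
      ∀ (D : ℤ) [NeZero D.natAbs], 3 ≤ |D| →
        ∀ Y : ℝ, 3 ≤ Y → ∀ k : ℝ, 1 ≤ k →
          ∀ V : Finset (DirichletCharacter ℂ D.natAbs),
            (∀ χ, χ ∈ V ↔ χ ^ 2 = 1 ∧ χ ≠ 1 ∧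
              ¬∃ β : ℝ, χ.LFunction β = 0 ∧ 1 - c / Real.log |(D : ℝ)| < β) →
            (1 - 1 / k ^ 2) * V.card ≤
              (Nat.card {χ : DirichletCharacter ℂ D.natAbs // χ ∈ V ∧
                Real.log |(D : ℝ)| ^ (-(k * C * Real.sqrt
                    ((Real.log ((omegaY Y D : ℝ) + 2) + Real.log (Real.log Y)) /
                        Real.log (Real.log |(D : ℝ)|) +
                      2 ^ (-(omegaY Y D : ℝ))))) ≤ (χ.LFunction 1).re} : ℝ) := by
  obtain ⟨c, C, hc, hC, card_bad_le⟩ := exists_card_LFunction_one_lt_le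
  refine ⟨c, C, hc, hC, fun D _ hD Y hY k hk V hV ↦ ?_⟩
  replace hD : 3 ≤ |(D : ℝ)| := by exact_mod_cast hD
  obtain rfl : V = zeroFreeCharacters D.natAbs (1 - c / Real.log |(D : ℝ)|) :=
    Finset.ext fun χ ↦ (hV χ).trans mem_zeroFreeCharacters.symm
  simp only [log_rpow_eq_exp_logLScale hD (k * C)]
  exact one_sub_mul_card_le_natCard (card_bad_le D hD Y hY k hk)

/-- There are absolute constants `c, C > 0` such that for every fundamental discriminant `D` with
`|D| ≥ 16`, every `3 ≤ Y ≤ |D|` and every `k ≥ 1`, with `V` the set of quadratic Dirichlet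
characters mod `|D|` whose `L`-function has no real zero `β > 1 - c/log |D|`, at least
`(1 - 1/k²)·#V` of the `χ ∈ V` satisfy
`L(1,χ) ≥ (log |D|)^{-kC√((log(ω_Y(D)+2) + log log Y)/log log |D| + 2^{-ω_Y(D)})}`. -/
theorem statement_8 :
    ∃ c C : ℝ, 0 < c ∧ 0 < C ∧
      ∀ (D : ℤ) [NeZero D.natAbs], IsFundDiscr D → 16 ≤ |D| →
        ∀ Y : ℝ, 3 ≤ Y → Y ≤ |(D : ℝ)| → ∀ k : ℝ, 1 ≤ k →
          ∀ V : Finset (DirichletCharacter ℂ D.natAbs),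
            (∀ χ, χ ∈ V ↔ χ ^ 2 = 1 ∧ χ ≠ 1 ∧
              ¬∃ β : ℝ, χ.LFunction β = 0 ∧ 1 - c / Real.log |(D : ℝ)| < β) →
            (1 - 1 / k ^ 2) * V.card ≤
              (Nat.card {χ : DirichletCharacter ℂ D.natAbs // χ ∈ V ∧
                Real.log |(D : ℝ)| ^ (-(k * C * Real.sqrt
                    ((Real.log ((omegaY Y D : ℝ) + 2) + Real.log (Real.log Y)) /
                        Real.log (Real.log |(D : ℝ)|) +
                      2 ^ (-(omegaY Y D : ℝ))))) ≤ (χ.LFunction 1).re} : ℝ) := by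
  obtain ⟨c, C, hc, hC, h⟩ := statement_8_general
  exact ⟨c, C, hc, hC, fun D _ _ hD Y hY _ ↦ h D (by linarith) Y hY⟩
end
end

section
/- Let N(X) denote the number of fundamental discriminants D with |D| ≤ X. For all ε > 0 and δ > 0 there exists a constant C > 0 such that for all X ≥ 3 and all real Y with 3 ≤ Y ≤ X^{1−δ}: | (1/N(X)) · ∑_{D fundamental, |D| ≤ X} ω_Y(D) − ∑_{p ≤ Y} 1/(p+1) | ≤ C · Y^{1/2} · X^{−1/2 + ε}, where the second sum runs over primes p ≤ Y. -/
open Filter Topology NumberField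

noncomputable section

/-- `∑_{p ≤ Y} f p`, the sum over primes `p ≤ Y`. -/
def primeSum (Y : ℝ) (f : ℕ → ℝ) : ℝ :=
  ∑ᶠ p ∈ {p : ℕ | p.Prime ∧ (p : ℝ) ≤ Y}, f p

/-!
Fundamental discriminants are counted, together with `1`, by their absolute value: the number `w n`
of such `D` with `|D| = n` equals `o n + o (n / 4) + 2 * o (n / 8)`, where `o` is the indicator of
the odd squarefree numbers and terms with a non-integral argument are dropped. The Möbius sieve
therefore evaluates the summatory function `S` of `w` with an error `O(√Z)`. For an odd prime `p`,
removing the prime discriminant `±p` shows that `w (p * n)` is `w n` if `p ∤ n` and `0` otherwise,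
so the part `A` of `S` carried by the multiples of `p` satisfies `A Z = S (Z / p) - A (Z / p)`.
Induction along `Z, Z / p, Z / p ^ 2, …` gives `A` the share `1 / (p + 1)` of the main term of `S`,
with error `O(√(Z / p))`. It remains to sum over `p ≤ Y`, using `∑ p ^ (-1/2) = O(√Y)`, and to
divide by `N(X) ≫ X`.
-/

/-! ### Squarefree numbers -/

lemma sq_dvd_sq_mul_iff {a b d : ℕ} (ha : Squarefree a) : d ^ 2 ∣ b ^ 2 * a ↔ d ∣ b := by
  refine ⟨fun h => ?_, fun h => (pow_dvd_pow_of_dvd h 2).mul_right a⟩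
  rcases Nat.eq_zero_or_pos b with rfl | hb
  · exact dvd_zero d
  obtain ⟨g, d', b', hg, hcop, rfl, rfl⟩ := Nat.exists_coprime' (Nat.gcd_pos_of_pos_right d hb)
  have hcancel : d' ^ 2 ∣ b' ^ 2 * a := by
    refine Nat.dvd_of_mul_dvd_mul_left (pow_pos hg 2) ?_
    convert h using 1 <;> ring
  have hsq : d' * d' ∣ a := by
    rw [← sq]
    exact (hcop.pow 2 2).dvd_of_dvd_mul_left hcancel
  rw [Nat.isUnit_iff.mp (ha d' hsq), one_mul]
  exact dvd_mul_left g b'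

lemma sum_moebius_sq_dvd {n : ℕ} (hn : n ≠ 0) {s : Finset ℕ} (hs : ∀ d, d ^ 2 ∣ n → d ∈ s) :
    ∑ d ∈ s with d ^ 2 ∣ n, ArithmeticFunction.moebius d = if Squarefree n then 1 else 0 := by
  obtain ⟨a, b, rfl, ha⟩ := Nat.sq_mul_squarefree n
  have hb : b ≠ 0 := by rintro rfl; simp at hn
  have hfilter : {d ∈ s | d ^ 2 ∣ b ^ 2 * a} = b.divisors := by
    ext d
    rw [Finset.mem_filter, Nat.mem_divisors, ← sq_dvd_sq_mul_iff ha (b := b)]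
    exact ⟨fun h => ⟨h.2, hb⟩, fun h => ⟨hs d h.1, h.1⟩⟩
  have hone : b = 1 ↔ Squarefree (b ^ 2 * a) := by
    refine ⟨by rintro rfl; simpa using ha, fun h => Nat.isUnit_iff.mp (h b ?_)⟩
    exact ⟨a, by ring⟩
  rw [hfilter, ← ArithmeticFunction.coe_mul_zeta_apply, ArithmeticFunction.moebius_mul_coe_zeta,
    ArithmeticFunction.one_apply]
  simp only [hone]

lemma abs_moebius_cast_le_one (d : ℕ) : |(ArithmeticFunction.moebius d : ℝ)| ≤ 1 :=
  mod_cast ArithmeticFunction.abs_moebius_le_one (n := d)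

lemma hasSum_moebius_div_sq :
    HasSum (fun d : ℕ => (ArithmeticFunction.moebius d : ℝ) / (d : ℝ) ^ 2) (6 / Real.pi ^ 2) := by
  have hs : 1 < (2 : ℂ).re := by norm_num
  have hvalue :
      LSeries (fun n => (ArithmeticFunction.moebius n : ℂ)) 2 = 6 / (Real.pi : ℂ) ^ 2 := by
    have h := ArithmeticFunction.LSeries_zeta_mul_Lseries_moebius hs
    rw [ArithmeticFunction.LSeries_zeta_eq_riemannZeta hs, riemannZeta_two] at h
    rw [eq_div_of_mul_eq _ ((mul_comm _ _).trans h)]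
    · rw [one_div_div]
    · exact left_ne_zero_of_mul_eq_one h
  have h := (ArithmeticFunction.LSeriesSummable_moebius_iff.mpr hs).LSeriesHasSum
  rw [LSeriesHasSum, hvalue] at h
  rw [← Complex.hasSum_ofReal]
  convert h using 1
  · ext n
    rcases eq_or_ne n 0 with rfl | hn
    · simp
    · rw [LSeries.term_of_ne_zero hn]
      push_cast
      norm_cast
  · push_cast
    rfl

lemma abs_sub_sum_Ioc_le_of_hasSum {f : ℕ → ℝ} {s : ℝ} (hf : ∀ d, |f d| ≤ ((d : ℝ) ^ 2)⁻¹)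
    (hs : HasSum f s) (M : ℕ) : |s - ∑ d ∈ Finset.Ioc 0 M, f d| ≤ 2 / (M + 1) := by
  have hzero : f 0 = 0 := by simpa using hf 0
  have hrange : ∑ d ∈ Finset.Ioc 0 M, f d = ∑ d ∈ Finset.range (M + 1), f d := by
    rw [Finset.sum_range_eq_add_Ico _ M.succ_pos, hzero, zero_add]
    rfl
  refine le_of_tendsto (hs.tendsto_sum_nat.sub_const _).abs ?_
  filter_upwards [eventually_ge_atTop (M + 1)] with n hn
  calc |∑ d ∈ Finset.range n, f d - ∑ d ∈ Finset.Ioc 0 M, f d|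
      = |∑ d ∈ Finset.Ioo M n, f d| := by
        rw [hrange, ← Finset.sum_Ico_eq_sub _ hn]
        rfl
    _ ≤ ∑ d ∈ Finset.Ioo M n, ((d : ℝ) ^ 2)⁻¹ :=
        (Finset.abs_sum_le_sum_abs _ _).trans (Finset.sum_le_sum fun d _ => hf d)
    _ ≤ 2 / (M + 1) := sum_Ioo_inv_sq_le M n

/-- The sum of `f n` over the positive integers `n ≤ Z`. -/
def summatory (f : ℕ → ℝ) (Z : ℝ) : ℝ :=
  ∑ n ∈ Finset.Ioc 0 ⌊Z⌋₊, f n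

/-- `f` has mean value `c` with square-root error: its summatory function is `c * Z + O(√Z)`, with
implied constant `B`, uniformly in `Z ≥ 0`. -/
def HasMeanValue (f : ℕ → ℝ) (c B : ℝ) : Prop :=
  ∀ Z : ℝ, 0 ≤ Z → |summatory f Z - c * Z| ≤ B * √Z

/-- The indicator function of the squarefree numbers. -/
def squarefreeIndicator (n : ℕ) : ℝ :=
  if Squarefree n then 1 else 0

lemma summatory_squarefreeIndicator (Z : ℝ) :
    summatory squarefreeIndicator Z = ∑ d ∈ Finset.Ioc 0 ⌊√Z⌋₊,
      (ArithmeticFunction.moebius d : ℝ) * (⌊Z / (d ^ 2 : ℕ)⌋₊ : ℝ) := by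
  have hmoebius : ∀ n ∈ Finset.Ioc 0 ⌊Z⌋₊, squarefreeIndicator n =
      ∑ d ∈ Finset.Ioc 0 ⌊√Z⌋₊, if d ^ 2 ∣ n then (ArithmeticFunction.moebius d : ℝ) else 0 := by
    intro n hn
    obtain ⟨hn0, hnZ⟩ := Finset.mem_Ioc.mp hn
    have hmem : ∀ d, d ^ 2 ∣ n → d ∈ Finset.Ioc 0 ⌊√Z⌋₊ := by
      intro d hd
      have hd0 : 0 < d := Nat.pos_of_ne_zero (by rintro rfl; simp at hd; omega)
      have hdZ : ((d ^ 2 : ℕ) : ℝ) ≤ Z := (Nat.le_floor_iff' (by positivity)).mp <|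
        (Nat.le_of_dvd hn0 hd).trans hnZ
      refine Finset.mem_Ioc.mpr ⟨hd0, Nat.le_floor (Real.le_sqrt_of_sq_le ?_)⟩
      exact_mod_cast hdZ
    rw [← Finset.sum_filter, ← Int.cast_sum, sum_moebius_sq_dvd hn0.ne' hmem]
    simp [squarefreeIndicator]
  rw [summatory, Finset.sum_congr rfl hmoebius, Finset.sum_comm]
  refine Finset.sum_congr rfl fun d _ => ?_
  rw [← Finset.sum_filter, Finset.sum_const, Nat.Ioc_filter_dvd_card_eq_div, nsmul_eq_mul, mul_comm,
    Nat.floor_div_natCast]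

lemma abs_summatory_squarefreeIndicator_sub_le {Z : ℝ} (hZ : 0 ≤ Z) :
    |summatory squarefreeIndicator Z -
      Z * ∑ d ∈ Finset.Ioc 0 ⌊√Z⌋₊, (ArithmeticFunction.moebius d : ℝ) / (d : ℝ) ^ 2| ≤ √Z := by
  calc _ = |∑ d ∈ Finset.Ioc 0 ⌊√Z⌋₊,
        (ArithmeticFunction.moebius d : ℝ) * (⌊Z / (d ^ 2 : ℕ)⌋₊ - Z / (d ^ 2 : ℕ))| := by
        rw [summatory_squarefreeIndicator, Finset.mul_sum, ← Finset.sum_sub_distrib]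
        congr! 2
        push_cast
        ring
    _ ≤ ∑ d ∈ Finset.Ioc 0 ⌊√Z⌋₊, 1 := by
        refine (Finset.abs_sum_le_sum_abs _ _).trans (Finset.sum_le_sum fun d _ => ?_)
        rw [abs_mul]
        refine mul_le_one₀ (abs_moebius_cast_le_one d) (abs_nonneg _) (abs_le.mpr ⟨?_, ?_⟩)
        · linarith [Nat.lt_floor_add_one (Z / (d ^ 2 : ℕ))]
        · linarith [Nat.floor_le (show 0 ≤ Z / (d ^ 2 : ℕ) by positivity)]
    _ ≤ √Z := by simpa using Nat.floor_le (Real.sqrt_nonneg Z)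

lemma hasMeanValue_squarefreeIndicator : HasMeanValue squarefreeIndicator (6 / Real.pi ^ 2) 3 := by
  intro Z hZ
  set M := ⌊√Z⌋₊
  have htail : |Z * (∑ d ∈ Finset.Ioc 0 M, (ArithmeticFunction.moebius d : ℝ) / (d : ℝ) ^ 2) -
      6 / Real.pi ^ 2 * Z| ≤ 2 * √Z := by
    have hterm (d : ℕ) : |(ArithmeticFunction.moebius d : ℝ) / (d : ℝ) ^ 2| ≤ ((d : ℝ) ^ 2)⁻¹ := by
      rw [abs_div, abs_of_nonneg (sq_nonneg (d : ℝ)), ← one_div]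
      gcongr
      exact abs_moebius_cast_le_one d
    calc _ = Z * |6 / Real.pi ^ 2 -
          ∑ d ∈ Finset.Ioc 0 M, (ArithmeticFunction.moebius d : ℝ) / (d : ℝ) ^ 2| := by
          rw [abs_sub_comm, mul_comm _ Z, ← mul_sub, abs_mul, abs_of_nonneg hZ]
      _ ≤ √Z * √Z * (2 / (M + 1)) := by
          rw [Real.mul_self_sqrt hZ]
          gcongr
          exact abs_sub_sum_Ioc_le_of_hasSum hterm hasSum_moebius_div_sq M
      _ = 2 * √Z * (√Z / (M + 1)) := by ring
      _ ≤ 2 * √Z * 1 := by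
          gcongr
          exact div_le_one_of_le₀ (Nat.lt_floor_add_one √Z).le (by positivity)
      _ = 2 * √Z := mul_one _
  calc _ ≤ √Z + 2 * √Z := (abs_sub_le _ _ _).trans
        (add_le_add (abs_summatory_squarefreeIndicator_sub_le hZ) htail)
    _ = 3 * √Z := by ring

/-! ### Dilations and restrictions to multiples -/

/-- The restriction of `f` to the multiples of `k`. -/
def restrictMultiples (k : ℕ) (f : ℕ → ℝ) (n : ℕ) : ℝ :=
  if k ∣ n then f n else 0

/-- The function supported on the multiples of `k` that takes the value `f m` at `k * m`. -/
def dilate (k : ℕ) (f : ℕ → ℝ) (n : ℕ) : ℝ :=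
  if k ∣ n then f (n / k) else 0

/-- The behaviour at `p` of a function supported on numbers not divisible by `p ^ 2` and insensitive
to a single factor `p`, as is the indicator function of the squarefree numbers for `p` prime. -/
def IsSquarefreeAt (p : ℕ) (f : ℕ → ℝ) : Prop :=
  ∀ n, f (p * n) = if p ∣ n then 0 else f n

lemma dilate_mul_left {k : ℕ} (hk : k ≠ 0) (f : ℕ → ℝ) (m : ℕ) : dilate k f (k * m) = f m := by
  rw [dilate, if_pos (dvd_mul_right k m), Nat.mul_div_cancel_left m (Nat.pos_of_ne_zero hk)]

lemma summatory_of_lt_one (f : ℕ → ℝ) {Z : ℝ} (hZ : Z < 1) : summatory f Z = 0 := by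
  simp [summatory, Nat.floor_eq_zero.mpr hZ]

lemma summatory_sub (f g : ℕ → ℝ) (Z : ℝ) :
    summatory (f - g) Z = summatory f Z - summatory g Z :=
  Finset.sum_sub_distrib f g

lemma summatory_dilate {k : ℕ} (hk : k ≠ 0) (f : ℕ → ℝ) (Z : ℝ) :
    summatory (dilate k f) Z = summatory f (Z / k) := by
  have hk0 := Nat.pos_of_ne_zero hk
  simp only [summatory, dilate, Nat.floor_div_natCast]
  rw [← Finset.sum_filter]
  refine Finset.sum_nbij' (· / k) (k * ·) ?_ ?_ ?_ ?_ fun _ _ => rfl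
  · intro n hn
    obtain ⟨hn, m, rfl⟩ := Finset.mem_filter.mp hn
    obtain ⟨hpos, hle⟩ := Finset.mem_Ioc.mp hn
    rw [Nat.mul_div_cancel_left m hk0, Finset.mem_Ioc, Nat.le_div_iff_mul_le hk0, mul_comm m]
    exact ⟨Nat.pos_of_mul_pos_left hpos, hle⟩
  · intro m hm
    obtain ⟨hpos, hle⟩ := Finset.mem_Ioc.mp hm
    rw [Nat.le_div_iff_mul_le hk0, mul_comm] at hle
    exact Finset.mem_filter.mpr ⟨Finset.mem_Ioc.mpr ⟨Nat.mul_pos hk0 hpos, hle⟩, dvd_mul_right k m⟩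
  · intro n hn
    exact Nat.mul_div_cancel' (Finset.mem_filter.mp hn).2
  · intro m _
    exact Nat.mul_div_cancel_left m hk0

namespace IsSquarefreeAt

variable {p : ℕ} {f g : ℕ → ℝ}

lemma restrictMultiples_self (hf : IsSquarefreeAt p f) (hp : p ≠ 0) :
    restrictMultiples p f = dilate p (f - restrictMultiples p f) := by
  ext n
  by_cases hn : p ∣ n
  · obtain ⟨m, rfl⟩ := hn
    rw [dilate_mul_left hp, restrictMultiples, if_pos (dvd_mul_right p m), hf m, Pi.sub_apply,
      restrictMultiples]
    split_ifs <;> simp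
  · rw [restrictMultiples, if_neg hn, dilate, if_neg hn]

lemma summatory_restrictMultiples (hf : IsSquarefreeAt p f) (hp : p ≠ 0) (Z : ℝ) :
    summatory (restrictMultiples p f) Z =
      summatory f (Z / p) - summatory (restrictMultiples p f) (Z / p) := by
  rw [← summatory_sub, ← summatory_dilate hp, ← hf.restrictMultiples_self hp]

lemma add (hf : IsSquarefreeAt p f) (hg : IsSquarefreeAt p g) : IsSquarefreeAt p (f + g) := by
  intro n
  rw [Pi.add_apply, hf n, hg n]
  split_ifs <;> simp

lemma dilate {k : ℕ} (hk : k ≠ 0) (hf : IsSquarefreeAt p f) (hpk : p.Coprime k) :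
    IsSquarefreeAt p (dilate k f) := by
  intro n
  by_cases hn : k ∣ n
  · obtain ⟨m, rfl⟩ := hn
    rw [Nat.mul_left_comm, dilate_mul_left hk, dilate_mul_left hk, hf m]
    simp only [hpk.dvd_mul_left]
  · simp [_root_.dilate, hpk.symm.dvd_mul_left, hn]

end IsSquarefreeAt

namespace HasMeanValue

variable {f g : ℕ → ℝ} {a b A B : ℝ}

lemma mono (hf : HasMeanValue f a A) (hAB : A ≤ B) : HasMeanValue f a B := fun Z hZ =>
  (hf Z hZ).trans (by gcongr)

lemma bound_nonneg (hf : HasMeanValue f a A) : 0 ≤ A := by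
  simpa using (abs_nonneg _).trans (hf 1 zero_le_one)

lemma add (hf : HasMeanValue f a A) (hg : HasMeanValue g b B) :
    HasMeanValue (f + g) (a + b) (A + B) := by
  intro Z hZ
  have hsum : summatory (f + g) Z = summatory f Z + summatory g Z := Finset.sum_add_distrib
  calc |summatory (f + g) Z - (a + b) * Z|
      = |(summatory f Z - a * Z) + (summatory g Z - b * Z)| := by rw [hsum]; ring_nf
    _ ≤ A * √Z + B * √Z := (abs_add_le _ _).trans (add_le_add (hf Z hZ) (hg Z hZ))
    _ = (A + B) * √Z := by ring

lemma neg (hf : HasMeanValue f a A) : HasMeanValue (-f) (-a) A := by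
  intro Z hZ
  have hsum : summatory (-f) Z = -summatory f Z := Finset.sum_neg_distrib f
  rw [hsum, ← abs_neg]
  convert hf Z hZ using 2
  ring

lemma sub (hf : HasMeanValue f a A) (hg : HasMeanValue g b B) :
    HasMeanValue (f - g) (a - b) (A + B) := by
  simpa only [sub_eq_add_neg] using hf.add hg.neg

lemma dilate {k : ℕ} (hk : k ≠ 0) (hf : HasMeanValue f a A) :
    HasMeanValue (dilate k f) (a / k) (A / √k) := by
  intro Z hZ
  rw [summatory_dilate hk]
  convert hf (Z / k) (by positivity) using 1
  · ring_nf
  · rw [Real.sqrt_div hZ]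
    ring

lemma restrictMultiples {p : ℕ} (hp : 2 ≤ p) (hf : HasMeanValue f a A)
    (hfp : IsSquarefreeAt p f) :
    HasMeanValue (restrictMultiples p f) (a / (p + 1)) (4 * A / √p) := by
  have hp2 : (2 : ℝ) ≤ p := mod_cast hp
  have hp0 : (0 : ℝ) < p := by linarith
  have hA := hf.bound_nonneg
  intro Z hZ
  obtain ⟨k, hk⟩ := pow_unbounded_of_one_lt Z (show (1 : ℝ) < p by linarith)
  induction k generalizing Z with
  | zero =>
    rw [pow_zero] at hk
    have haZ : |a * Z| ≤ A * √Z := by simpa [summatory_of_lt_one _ hk] using hf Z hZ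
    have hsqrt : √p ≤ p + 1 := (Real.sqrt_le_left (by positivity)).mpr (by nlinarith)
    calc |summatory (_root_.restrictMultiples p f) Z - a / (p + 1) * Z|
        = |a * Z| / (p + 1) := by
          rw [summatory_of_lt_one _ hk, zero_sub, abs_neg, div_mul_eq_mul_div, abs_div,
            abs_of_pos (by positivity : (0 : ℝ) < p + 1)]
      _ ≤ 4 * (A * √Z) / √p := by
          gcongr
          linarith [show 0 ≤ A * √Z by positivity]
      _ = 4 * A / √p * √Z := by ring
  | succ k ih =>
    have hih := ih (Z / p) (by positivity) (by rwa [div_lt_iff₀ hp0, ← pow_succ])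
    -- The constant `4` survives the recursion because `1 + 4 / √p ≤ 4` for `p ≥ 2`.
    have hsqrt : 1 / √(p : ℝ) ≤ 3 / 4 := by
      rw [div_le_iff₀ (by positivity), ← div_le_iff₀' (by norm_num)]
      exact Real.le_sqrt_of_sq_le (by linarith)
    calc |summatory (_root_.restrictMultiples p f) Z - a / (p + 1) * Z|
        = |(summatory f (Z / p) - a * (Z / p)) -
            (summatory (_root_.restrictMultiples p f) (Z / p) - a / (p + 1) * (Z / p))| := by
          rw [hfp.summatory_restrictMultiples (by omega)]
          congr 1
          field_simp
          ring
      _ ≤ A * √(Z / p) + 4 * A / √p * √(Z / p) :=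
          (abs_sub _ _).trans (add_le_add (hf _ (by positivity)) hih)
      _ = (A + 4 * A * (1 / √p)) * √(Z / p) := by ring
      _ ≤ (A + 4 * A * (3 / 4)) * √(Z / p) := by gcongr
      _ = 4 * A / √p * √Z := by rw [Real.sqrt_div hZ]; ring

end HasMeanValue

/-! ### The weight of the fundamental discriminants -/

/-- The indicator function of the odd squarefree numbers. -/
def oddSquarefreeIndicator (n : ℕ) : ℝ :=
  if Squarefree n ∧ n % 2 = 1 then 1 else 0

lemma oddSquarefreeIndicator_eq_sub : oddSquarefreeIndicator =
    squarefreeIndicator - restrictMultiples 2 squarefreeIndicator := by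
  ext n
  rcases Nat.mod_two_eq_zero_or_one n with hn | hn <;>
    simp [oddSquarefreeIndicator, squarefreeIndicator, restrictMultiples,
      Nat.dvd_iff_mod_eq_zero, hn]

lemma squarefree_prime_mul_iff {p n : ℕ} (hp : p.Prime) :
    Squarefree (p * n) ↔ Squarefree n ∧ ¬p ∣ n := by
  rw [Nat.squarefree_mul_iff, hp.coprime_iff_not_dvd]
  exact ⟨fun h => ⟨h.2.2, h.1⟩, fun h => ⟨h.2, hp.prime.squarefree, h.1⟩⟩

lemma isSquarefreeAt_squarefreeIndicator {p : ℕ} (hp : p.Prime) :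
    IsSquarefreeAt p squarefreeIndicator := by
  intro n
  simp only [squarefreeIndicator, squarefree_prime_mul_iff hp]
  by_cases hn : p ∣ n <;> simp [hn]

lemma isSquarefreeAt_oddSquarefreeIndicator {p : ℕ} (hp : p.Prime) (hp2 : p ≠ 2) :
    IsSquarefreeAt p oddSquarefreeIndicator := by
  intro n
  have hodd : p % 2 = 1 := hp.eq_two_or_odd.resolve_left hp2
  simp only [oddSquarefreeIndicator, squarefree_prime_mul_iff hp, Nat.mul_mod p n, hodd]
  by_cases hn : p ∣ n <;> simp [hn]

lemma hasMeanValue_oddSquarefreeIndicator :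
    HasMeanValue oddSquarefreeIndicator (4 / Real.pi ^ 2) 12 := by
  rw [oddSquarefreeIndicator_eq_sub]
  convert! (hasMeanValue_squarefreeIndicator.sub <|
    hasMeanValue_squarefreeIndicator.restrictMultiples le_rfl
      (isSquarefreeAt_squarefreeIndicator Nat.prime_two)).mono (B := 12) ?_ using 1
  · push_cast
    ring
  · have hsqrt : 4 / 3 ≤ √(2 : ℕ) := Real.le_sqrt_of_sq_le (by norm_num)
    have hdiv : 4 * 3 / √(2 : ℕ) ≤ 4 * 3 / (4 / 3) := by gcongr
    linarith

/-- A fundamental discriminant or `1`. Unlike the fundamental discriminants alone, these are closed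
under cancelling a prime discriminant from them. -/
def IsFundDiscrOrOne (D : ℤ) : Prop :=
  D = 1 ∨ IsFundDiscr D

lemma isFundDiscrOrOne_iff {D : ℤ} : IsFundDiscrOrOne D ↔ (Squarefree D.natAbs ∧ D % 4 = 1) ∨
    ∃ m : ℤ, D = 4 * m ∧ Squarefree m.natAbs ∧ (m % 4 = 2 ∨ m % 4 = 3) := by
  simp only [IsFundDiscrOrOne, IsFundDiscr, Int.squarefree_natAbs]
  by_cases hD : D = 1
  · simp [hD]
  · simp [hD]

lemma isFundDiscrOrOne_iff_of_odd {D : ℤ} (hD : D % 2 = 1) :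
    IsFundDiscrOrOne D ↔ Squarefree D.natAbs ∧ D % 4 = 1 := by
  rw [isFundDiscrOrOne_iff, or_iff_left]
  rintro ⟨m, rfl, -⟩
  omega

lemma isFundDiscrOrOne_four_mul_iff {m : ℤ} :
    IsFundDiscrOrOne (4 * m) ↔ Squarefree m.natAbs ∧ (m % 4 = 2 ∨ m % 4 = 3) := by
  rw [isFundDiscrOrOne_iff, or_iff_right (by omega)]
  simp

lemma not_isFundDiscrOrOne_of_mod_four_eq_two {D : ℤ} (hD : D % 4 = 2) : ¬IsFundDiscrOrOne D := by
  rw [isFundDiscrOrOne_iff]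
  rintro (⟨-, h⟩ | ⟨m, rfl, -⟩) <;> omega

open scoped Classical in
/-- The number of `D`, fundamental discriminants or `1`, with `|D| = n`. -/
def fundDiscrWeight (n : ℕ) : ℝ :=
  Finset.card {D ∈ ({(n : ℤ), -(n : ℤ)} : Finset ℤ) | IsFundDiscrOrOne D}

open scoped Classical in
lemma fundDiscrWeight_eq_add {n : ℕ} (hn : n ≠ 0) : fundDiscrWeight n =
    (if IsFundDiscrOrOne n then 1 else 0) + (if IsFundDiscrOrOne (-n) then 1 else 0) := by
  rw [fundDiscrWeight, Finset.card_filter, Finset.sum_pair (by omega)]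
  push_cast
  rfl

lemma fundDiscrWeight_of_odd {n : ℕ} (hn : n % 2 = 1) :
    fundDiscrWeight n = oddSquarefreeIndicator n := by
  rw [fundDiscrWeight_eq_add (by omega), oddSquarefreeIndicator,
    isFundDiscrOrOne_iff_of_odd (by omega), isFundDiscrOrOne_iff_of_odd (by omega), Int.natAbs_neg,
    Int.natAbs_natCast]
  by_cases hsq : Squarefree n
  · rcases (by omega : n % 4 = 1 ∨ n % 4 = 3) with h | h
    · simp [hsq, hn, show (n : ℤ) % 4 = 1 by omega, show -(n : ℤ) % 4 = 3 by omega]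
    · simp [hsq, hn, show (n : ℤ) % 4 = 3 by omega, show -(n : ℤ) % 4 = 1 by omega]
  · simp [hsq]

lemma fundDiscrWeight_of_mod_four_eq_two {n : ℕ} (hn : n % 4 = 2) : fundDiscrWeight n = 0 := by
  rw [fundDiscrWeight_eq_add (by omega),
    if_neg (not_isFundDiscrOrOne_of_mod_four_eq_two (by omega)),
    if_neg (not_isFundDiscrOrOne_of_mod_four_eq_two (by omega)), add_zero]

lemma fundDiscrWeight_four_mul {m : ℕ} (hm : m ≠ 0) : fundDiscrWeight (4 * m) =
    (if Squarefree m ∧ (m % 4 = 2 ∨ m % 4 = 3) then 1 else 0) +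
      (if Squarefree m ∧ (m % 4 = 2 ∨ m % 4 = 1) then 1 else 0) := by
  have hpos : (m : ℤ) % 4 = 2 ∨ (m : ℤ) % 4 = 3 ↔ m % 4 = 2 ∨ m % 4 = 3 := by omega
  have hneg : -(m : ℤ) % 4 = 2 ∨ -(m : ℤ) % 4 = 3 ↔ m % 4 = 2 ∨ m % 4 = 1 := by omega
  rw [fundDiscrWeight_eq_add (by omega)]
  simp only [Nat.cast_mul, Nat.cast_ofNat, ← mul_neg, isFundDiscrOrOne_four_mul_iff,
    Int.natAbs_neg, Int.natAbs_natCast, hpos, hneg]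

lemma fundDiscrWeight_four_mul_of_odd {m : ℕ} (hm : m % 2 = 1) :
    fundDiscrWeight (4 * m) = oddSquarefreeIndicator m := by
  rw [fundDiscrWeight_four_mul (by omega), oddSquarefreeIndicator]
  rcases (by omega : m % 4 = 1 ∨ m % 4 = 3) with h | h <;> simp [hm, h]

lemma fundDiscrWeight_eight_mul (k : ℕ) :
    fundDiscrWeight (8 * k) = oddSquarefreeIndicator k + oddSquarefreeIndicator k := by
  rcases eq_or_ne k 0 with rfl | hk
  · simp [fundDiscrWeight, oddSquarefreeIndicator, isFundDiscrOrOne_iff]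
  have hsq : Squarefree (2 * k) ↔ Squarefree k ∧ k % 2 = 1 := by
    rw [squarefree_prime_mul_iff Nat.prime_two, Nat.two_dvd_ne_zero]
  rw [show 8 * k = 4 * (2 * k) by ring, fundDiscrWeight_four_mul (by omega), oddSquarefreeIndicator]
  have hodd : k % 2 = 1 → 2 * k % 4 = 2 := by omega
  by_cases h : k % 2 = 1
  · simp [hsq, h, hodd h]
  · simp [hsq, h]

lemma fundDiscrWeight_eq : fundDiscrWeight = oddSquarefreeIndicator +
    dilate 4 oddSquarefreeIndicator +
      (dilate 8 oddSquarefreeIndicator + dilate 8 oddSquarefreeIndicator) := by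
  have heven {n : ℕ} (hn : n % 2 = 0) : oddSquarefreeIndicator n = 0 := by
    simp [oddSquarefreeIndicator, hn]
  have hdilate {k n : ℕ} (hn : ¬k ∣ n) : dilate k oddSquarefreeIndicator n = 0 := if_neg hn
  ext n
  simp only [Pi.add_apply]
  by_cases h2 : n % 2 = 1
  · rw [fundDiscrWeight_of_odd h2, hdilate (k := 4) (by omega), hdilate (k := 8) (by omega)]
    ring
  by_cases h4 : n % 4 = 2
  · rw [fundDiscrWeight_of_mod_four_eq_two h4, heven (by omega), hdilate (k := 4) (by omega),
      hdilate (k := 8) (by omega)]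
    ring
  obtain ⟨m, rfl⟩ : 4 ∣ n := by omega
  rw [dilate_mul_left (by norm_num), heven (n := 4 * m) (by omega)]
  by_cases hm : m % 2 = 1
  · rw [fundDiscrWeight_four_mul_of_odd hm, hdilate (k := 8) (by omega)]
    ring
  · obtain ⟨k, rfl⟩ : 2 ∣ m := by omega
    rw [heven (n := 2 * k) (by omega), show 4 * (2 * k) = 8 * k by ring, fundDiscrWeight_eight_mul,
      dilate_mul_left (by norm_num), add_zero, zero_add]

lemma hasMeanValue_fundDiscrWeight : HasMeanValue fundDiscrWeight (6 / Real.pi ^ 2) 27 := by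
  have ho := hasMeanValue_oddSquarefreeIndicator
  have h8 := ho.dilate (k := 8) (by norm_num)
  rw [fundDiscrWeight_eq]
  convert! ((ho.add (ho.dilate (k := 4) (by norm_num))).add (h8.add h8)).mono (B := 27) ?_ using 1
  · push_cast
    ring
  · have hsqrt8 : 8 / 3 ≤ √(8 : ℕ) := Real.le_sqrt_of_sq_le (by norm_num)
    have hdiv8 : 12 / √(8 : ℕ) ≤ 12 / (8 / 3) := by gcongr
    linarith

lemma isSquarefreeAt_fundDiscrWeight {p : ℕ} (hp : p.Prime) (hp2 : p ≠ 2) :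
    IsSquarefreeAt p fundDiscrWeight := by
  have ho := isSquarefreeAt_oddSquarefreeIndicator hp hp2
  have hcoprime (k : ℕ) : p.Coprime (2 ^ k) :=
    Nat.Coprime.pow_right k ((Nat.coprime_primes hp Nat.prime_two).mpr hp2)
  have h4 := ho.dilate (by norm_num) (hcoprime 2)
  have h8 := ho.dilate (by norm_num) (hcoprime 3)
  rw [fundDiscrWeight_eq]
  exact (ho.add h4).add (h8.add h8)

lemma restrictMultiples_two_fundDiscrWeight :
    restrictMultiples 2 fundDiscrWeight = fundDiscrWeight - oddSquarefreeIndicator := by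
  ext n
  rw [restrictMultiples, Pi.sub_apply]
  split_ifs with hn
  · simp [oddSquarefreeIndicator, Nat.mod_eq_zero_of_dvd hn]
  · rw [fundDiscrWeight_of_odd (by omega), sub_self]

lemma hasMeanValue_restrictMultiples_fundDiscrWeight {p : ℕ} (hp : p.Prime) :
    HasMeanValue (restrictMultiples p fundDiscrWeight)
      (6 / Real.pi ^ 2 / (p + 1)) (108 / √p) := by
  have hw := hasMeanValue_fundDiscrWeight
  rcases eq_or_ne p 2 with rfl | hp2
  · rw [restrictMultiples_two_fundDiscrWeight]
    convert! (hw.sub hasMeanValue_oddSquarefreeIndicator).mono (B := 108 / √(2 : ℕ)) ?_ using 1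
    · push_cast
      ring
    · rw [le_div_iff₀ (by positivity), ← le_div_iff₀' (by norm_num)]
      exact (Real.sqrt_le_left (by norm_num)).mpr (by norm_num)
  · convert! hw.restrictMultiples hp.two_le (isSquarefreeAt_fundDiscrWeight hp hp2) using 2
    norm_num

open scoped Classical in
/-- The finite set of all `D`, fundamental discriminants or `1`, with `|D| ≤ X`; for `X < 0` the
floor is `0`, which leaves only the candidate `D = 0` and hence the empty set. -/
def fundDiscrsUpTo (X : ℝ) : Finset ℤ :=
  {D ∈ Finset.Icc (-(⌊X⌋₊ : ℤ)) ⌊X⌋₊ | IsFundDiscrOrOne D}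

lemma not_isFundDiscrOrOne_zero : ¬IsFundDiscrOrOne 0 := by
  simp [isFundDiscrOrOne_iff]

lemma mem_fundDiscrsUpTo_iff_natAbs_le {X : ℝ} {D : ℤ} :
    D ∈ fundDiscrsUpTo X ↔ D.natAbs ≤ ⌊X⌋₊ ∧ IsFundDiscrOrOne D := by
  classical
  rw [fundDiscrsUpTo, Finset.mem_filter, Finset.mem_Icc, ← abs_le, Int.abs_eq_natAbs, Nat.cast_le]

lemma mem_fundDiscrsUpTo {X : ℝ} (hX : 0 ≤ X) {D : ℤ} :
    D ∈ fundDiscrsUpTo X ↔ |(D : ℝ)| ≤ X ∧ IsFundDiscrOrOne D := by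
  rw [mem_fundDiscrsUpTo_iff_natAbs_le, Nat.le_floor_iff hX, Nat.cast_natAbs, Int.cast_abs]

lemma mem_erase_fundDiscrsUpTo {X : ℝ} (hX : 0 ≤ X) {D : ℤ} :
    D ∈ (fundDiscrsUpTo X).erase 1 ↔ IsFundDiscr D ∧ |(D : ℝ)| ≤ X := by
  rw [Finset.mem_erase, mem_fundDiscrsUpTo hX, IsFundDiscrOrOne]
  have hne : IsFundDiscr D → D ≠ 1 := And.left
  tauto

open scoped Classical in
lemma sum_fundDiscrsUpTo (g : ℕ → ℝ) (X : ℝ) :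
    ∑ D ∈ fundDiscrsUpTo X, g D.natAbs = summatory (fun n => fundDiscrWeight n * g n) X := by
  have hmaps : ∀ D ∈ fundDiscrsUpTo X, D.natAbs ∈ Finset.Ioc 0 ⌊X⌋₊ := by
    intro D hD
    rw [mem_fundDiscrsUpTo_iff_natAbs_le] at hD
    have hne : D ≠ 0 := by rintro rfl; exact not_isFundDiscrOrOne_zero hD.2
    exact Finset.mem_Ioc.mpr ⟨Int.natAbs_pos.mpr hne, hD.1⟩
  rw [← Finset.sum_fiberwise_of_maps_to hmaps, summatory]
  refine Finset.sum_congr rfl fun n hn => ?_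
  have hfiber : {D ∈ fundDiscrsUpTo X | D.natAbs = n} =
      {D ∈ ({(n : ℤ), -(n : ℤ)} : Finset ℤ) | IsFundDiscrOrOne D} := by
    ext D
    have hle := (Finset.mem_Ioc.mp hn).2
    simp only [Finset.mem_filter, mem_fundDiscrsUpTo_iff_natAbs_le, Finset.mem_insert,
      Finset.mem_singleton, ← Int.natAbs_eq_iff]
    exact ⟨fun h => ⟨h.2, h.1.2⟩, fun h => ⟨⟨h.1.le.trans hle, h.2⟩, h.1⟩⟩
  rw [Finset.sum_congr rfl (g := fun _ => g n) fun D hD => by rw [(Finset.mem_filter.mp hD).2],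
    hfiber, Finset.sum_const, nsmul_eq_mul, fundDiscrWeight]

lemma fdCount_eq_card_erase {X : ℝ} (hX : 0 ≤ X) :
    fdCount (fun _ => True) X = ((fundDiscrsUpTo X).erase 1).card :=
  Nat.subtype_card _ fun D => by rw [mem_erase_fundDiscrsUpTo hX, and_true]

lemma fdCount_add_one {X : ℝ} (hX : 1 ≤ X) :
    (fdCount (fun _ => True) X : ℝ) + 1 = summatory fundDiscrWeight X := by
  have hX0 : 0 ≤ X := by linarith
  have hone : 1 ∈ fundDiscrsUpTo X := (mem_fundDiscrsUpTo hX0).mpr ⟨by simpa, Or.inl rfl⟩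
  have hcard := sum_fundDiscrsUpTo (fun _ => 1) X
  simp only [mul_one, Finset.sum_const, nsmul_eq_mul] at hcard
  rw [fdCount_eq_card_erase hX0, ← hcard]
  exact_mod_cast Finset.card_erase_add_one hone

lemma abs_fdCount_sub_le {X : ℝ} (hX : 1 ≤ X) :
    |(fdCount (fun _ => True) X : ℝ) - 6 / Real.pi ^ 2 * X| ≤ 28 * √X := by
  have hmean := abs_le.mp (hasMeanValue_fundDiscrWeight X (by linarith))
  have hsqrt := Real.one_le_sqrt.mpr hX
  rw [← fdCount_add_one hX] at hmean
  exact abs_le.mpr ⟨by linarith, by linarith⟩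

lemma one_le_fdCount {X : ℝ} (hX : 3 ≤ X) : 1 ≤ fdCount (fun _ => True) X := by
  have hX0 : 0 ≤ X := by linarith
  have hsq : Squarefree (-3 : ℤ) := Int.squarefree_natAbs.mp Nat.prime_three.prime.squarefree
  have hmem : (-3 : ℤ) ∈ (fundDiscrsUpTo X).erase 1 :=
    (mem_erase_fundDiscrsUpTo hX0).mpr
      ⟨⟨by norm_num, Or.inl ⟨hsq, by norm_num⟩⟩, by norm_num [abs_of_pos, hX]⟩
  rw [fdCount_eq_card_erase hX0]
  exact Finset.card_pos.mpr ⟨_, hmem⟩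

/-! ### The average of `omegaY` -/

lemma le_mul_of_abs_sub_le_mul_sqrt {a L N X : ℝ} (ha : 0 < a) (hX : 0 ≤ X) (hN : 1 ≤ N)
    (h : |N - a * X| ≤ L * √X) : X ≤ (2 * a + L ^ 2) / a ^ 2 * N := by
  have hlower : a * X ≤ N + L * √X := by linarith [(abs_le.mp h).1]
  have hamgm : 2 * a * (L * √X) ≤ a ^ 2 * X + L ^ 2 := by
    linarith [sq_nonneg (a * √X - L), Real.sq_sqrt hX,
      show (a * √X - L) ^ 2 = a ^ 2 * √X ^ 2 - 2 * a * (L * √X) + L ^ 2 by ring,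
      show a ^ 2 * √X ^ 2 = a ^ 2 * X by rw [Real.sq_sqrt hX]]
  have hmul : a ^ 2 * X ≤ (2 * a + L ^ 2) * N := by
    nlinarith [mul_le_mul_of_nonneg_left hlower ha.le, mul_le_mul_of_nonneg_left hN (sq_nonneg L)]
  rw [div_mul_eq_mul_div, le_div_iff₀ (by positivity)]
  linarith

lemma sum_Ioc_one_div_sqrt_le (M : ℕ) : ∑ n ∈ Finset.Ioc 0 M, 1 / √(n : ℝ) ≤ 2 * √M := by
  induction M with
  | zero => simp
  | succ k ih =>
    have hstep : 1 / √((k + 1 : ℕ) : ℝ) ≤ 2 * √((k + 1 : ℕ) : ℝ) - 2 * √k := by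
      have hk := Real.sq_sqrt (Nat.cast_nonneg (α := ℝ) k)
      have hk1 := Real.sq_sqrt (Nat.cast_nonneg (α := ℝ) (k + 1))
      rw [div_le_iff₀ (by positivity)]
      push_cast at hk1 ⊢
      nlinarith [sq_nonneg (√((k : ℝ) + 1) - √k)]
    rw [Finset.sum_Ioc_succ_top k.zero_le]
    linarith

lemma abs_average_sub_sum_le {s : Finset ℕ} (hs : ∀ p ∈ s, 0 < p) {A : ℕ → ℝ} {N M E : ℝ}
    (hN : 0 < N) (hNM : |N - M| ≤ E) (hA : ∀ p ∈ s, |A p - M / (p + 1)| ≤ E / √p) :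
    |1 / N * ∑ p ∈ s, A p - ∑ p ∈ s, 1 / ((p : ℝ) + 1)| ≤ 2 * E / N * ∑ p ∈ s, 1 / √(p : ℝ) := by
  have hterm : ∀ p ∈ s, |A p - N / (p + 1)| ≤ 2 * E * (1 / √(p : ℝ)) := by
    intro p hp
    have hp0 : (0 : ℝ) < p := mod_cast hs p hp
    have hsqrt : √(p : ℝ) ≤ p + 1 := (Real.sqrt_le_left (by positivity)).mpr (by nlinarith)
    have hmain : |M / (p + 1) - N / (p + 1)| ≤ E / √p := by
      rw [← sub_div, abs_div, abs_sub_comm, abs_of_pos (by positivity : (0 : ℝ) < p + 1)]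
      have hE := (abs_nonneg _).trans hNM
      gcongr
    calc |A p - N / (p + 1)| ≤ E / √p + E / √p :=
          (abs_sub_le _ _ _).trans (add_le_add (hA p hp) hmain)
      _ = 2 * E * (1 / √(p : ℝ)) := by ring
  calc |1 / N * ∑ p ∈ s, A p - ∑ p ∈ s, 1 / ((p : ℝ) + 1)|
      = 1 / N * |∑ p ∈ s, (A p - N / (p + 1))| := by
        rw [← abs_of_pos (one_div_pos.mpr hN), ← abs_mul, abs_of_pos (one_div_pos.mpr hN),
          Finset.sum_sub_distrib, mul_sub, Finset.mul_sum _ (fun p : ℕ => N / ((p : ℝ) + 1))]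
        congr! 3 with p
        field_simp
    _ ≤ 1 / N * ∑ p ∈ s, 2 * E * (1 / √(p : ℝ)) := by
        gcongr
        exact (Finset.abs_sum_le_sum_abs _ _).trans (Finset.sum_le_sum hterm)
    _ = 2 * E / N * ∑ p ∈ s, 1 / √(p : ℝ) := by rw [← Finset.mul_sum]; ring

lemma setOf_prime_le_eq {Y : ℝ} (hY : 0 ≤ Y) :
    {p : ℕ | p.Prime ∧ (p : ℝ) ≤ Y} = (Nat.primesLE ⌊Y⌋₊ : Set ℕ) := by
  ext p
  rw [Finset.mem_coe, Nat.mem_primesLE, Nat.le_floor_iff hY, and_comm]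
  rfl

lemma primeSum_eq_sum {Y : ℝ} (hY : 0 ≤ Y) (f : ℕ → ℝ) :
    primeSum Y f = ∑ p ∈ Nat.primesLE ⌊Y⌋₊, f p := by
  rw [primeSum, setOf_prime_le_eq hY, finsum_mem_coe_finset]

lemma omegaY_eq_sum {Y : ℝ} (hY : 0 ≤ Y) (D : ℤ) :
    (omegaY Y D : ℝ) = ∑ p ∈ Nat.primesLE ⌊Y⌋₊, if p ∣ D.natAbs then 1 else 0 := by
  have hcard : omegaY Y D = Finset.card {p ∈ Nat.primesLE ⌊Y⌋₊ | p ∣ D.natAbs} :=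
    Nat.subtype_card _ fun p => by
      rw [Finset.mem_filter, Nat.mem_primesLE, Nat.le_floor_iff hY, Int.natCast_dvd]
      tauto
  rw [hcard, Finset.card_filter]
  push_cast
  rfl

lemma finsum_omegaY_eq_sum {X Y : ℝ} (hX : 0 ≤ X) (hY : 0 ≤ Y) :
    ∑ᶠ D ∈ {D : ℤ | IsFundDiscr D ∧ |(D : ℝ)| ≤ X}, (omegaY Y D : ℝ) =
      ∑ p ∈ Nat.primesLE ⌊Y⌋₊, summatory (restrictMultiples p fundDiscrWeight) X := by
  have hset : {D : ℤ | IsFundDiscr D ∧ |(D : ℝ)| ≤ X} = ((fundDiscrsUpTo X).erase 1 : Set ℤ) := by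
    ext D
    exact_mod_cast (mem_erase_fundDiscrsUpTo hX).symm
  have hone : (omegaY Y 1 : ℝ) = 0 := by
    rw [omegaY_eq_sum hY]
    refine Finset.sum_eq_zero fun p hp => if_neg ?_
    simpa using (Nat.mem_primesLE.mp hp).2.ne_one
  rw [hset, finsum_mem_coe_finset,
    Finset.sum_erase _ (f := fun D => (omegaY Y D : ℝ)) hone]
  simp only [omegaY_eq_sum hY]
  rw [Finset.sum_comm]
  refine Finset.sum_congr rfl fun p _ => ?_
  rw [sum_fundDiscrsUpTo (fun n => if p ∣ n then 1 else 0)]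
  simp only [mul_ite, mul_one, mul_zero]
  rfl

lemma sum_primesLE_one_div_sqrt_le {Y : ℝ} (hY : 0 ≤ Y) :
    ∑ p ∈ Nat.primesLE ⌊Y⌋₊, 1 / √(p : ℝ) ≤ 2 * √Y := by
  have hsub : Nat.primesLE ⌊Y⌋₊ ⊆ Finset.Ioc 0 ⌊Y⌋₊ := fun p hp =>
    have hp := Nat.mem_primesLE.mp hp
    Finset.mem_Ioc.mpr ⟨hp.2.pos, hp.1⟩
  calc ∑ p ∈ Nat.primesLE ⌊Y⌋₊, 1 / √(p : ℝ) ≤ ∑ n ∈ Finset.Ioc 0 ⌊Y⌋₊, 1 / √(n : ℝ) :=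
        Finset.sum_le_sum_of_subset_of_nonneg hsub fun _ _ _ => by positivity
    _ ≤ 2 * √(⌊Y⌋₊ : ℝ) := sum_Ioc_one_div_sqrt_le _
    _ ≤ 2 * √Y := by gcongr; exact Nat.floor_le hY

theorem statement_9_general :
    ∃ C : ℝ, 0 < C ∧
      ∀ X : ℝ, 3 ≤ X → ∀ Y : ℝ, 0 ≤ Y →
        |(1 / (fdCount (fun _ => True) X : ℝ)) *
            (∑ᶠ D ∈ {D : ℤ | IsFundDiscr D ∧ |(D : ℝ)| ≤ X}, (omegaY Y D : ℝ)) -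
          primeSum Y (fun p => 1 / ((p : ℝ) + 1))| ≤
          C * Y ^ ((1 : ℝ) / 2) * X ^ (-(1 : ℝ) / 2) := by
  set a : ℝ := 6 / Real.pi ^ 2
  set K : ℝ := (2 * a + 28 ^ 2) / a ^ 2
  refine ⟨432 * K, by positivity, fun X hX Y hY => ?_⟩
  have hX0 : 0 < X := by linarith
  set N : ℝ := (fdCount (fun _ => True) X : ℝ)
  have hN1 : 1 ≤ N := Nat.one_le_cast.mpr (one_le_fdCount hX)
  have hcount : |N - a * X| ≤ 28 * √X := abs_fdCount_sub_le (by linarith)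
  have hXN : X ≤ K * N := le_mul_of_abs_sub_le_mul_sqrt (by positivity) hX0.le hN1 hcount
  have hmultiples (p : ℕ) (hp : p ∈ Nat.primesLE ⌊Y⌋₊) :
      |summatory (restrictMultiples p fundDiscrWeight) X - a * X / (p + 1)| ≤ 108 * √X / √p := by
    rw [mul_div_right_comm, mul_div_right_comm]
    exact hasMeanValue_restrictMultiples_fundDiscrWeight (Nat.mem_primesLE.mp hp).2 X hX0.le
  rw [finsum_omegaY_eq_sum hX0.le hY, primeSum_eq_sum hY, ← Real.sqrt_eq_rpow, neg_div,
    Real.rpow_neg hX0.le, ← Real.sqrt_eq_rpow]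
  calc _ ≤ 2 * (108 * √X) / N * ∑ p ∈ Nat.primesLE ⌊Y⌋₊, 1 / √(p : ℝ) :=
        abs_average_sub_sum_le (fun p hp => (Nat.mem_primesLE.mp hp).2.pos) (by linarith)
          (hcount.trans (by gcongr; norm_num)) hmultiples
    _ ≤ 2 * (108 * √X) / N * (2 * √Y) := by gcongr; exact sum_primesLE_one_div_sqrt_le hY
    _ = 432 * √Y * (√X / N) := by ring
    _ ≤ 432 * √Y * (K * (√X)⁻¹) := by
        gcongr
        rw [div_le_iff₀ (by linarith), ← div_eq_mul_inv, div_mul_eq_mul_div,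
          le_div_iff₀ (by positivity), Real.mul_self_sqrt hX0.le]
        exact hXN
    _ = 432 * K * √Y * (√X)⁻¹ := by ring

/-- Mean of `ω_Y` over fundamental discriminants: for all `ε, δ > 0` there is `C > 0` such that
for `X ≥ 3` and `3 ≤ Y ≤ X^{1-δ}`,
`|(1/N(X)) ∑_{|D| ≤ X} ω_Y(D) - ∑_{p ≤ Y} 1/(p+1)| ≤ C Y^{1/2} X^{-1/2+ε}`. -/
theorem statement_9 (ε δ : ℝ) (hε : 0 < ε) (hδ : 0 < δ) :
    ∃ C : ℝ, 0 < C ∧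
      ∀ X : ℝ, 3 ≤ X → ∀ Y : ℝ, 3 ≤ Y → Y ≤ X ^ (1 - δ) →
        |(1 / (fdCount (fun _ => True) X : ℝ)) *
            (∑ᶠ D ∈ {D : ℤ | IsFundDiscr D ∧ |(D : ℝ)| ≤ X}, (omegaY Y D : ℝ)) -
          primeSum Y (fun p => 1 / ((p : ℝ) + 1))| ≤
          C * Y ^ ((1 : ℝ) / 2) * X ^ (-(1 : ℝ) / 2 + ε) := by
  obtain ⟨C, hC, h⟩ := statement_9_general
  refine ⟨C, hC, fun X hX Y hY _ => (h X hX Y (by linarith)).trans ?_⟩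
  gcongr <;> linarith
end
end
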